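/- arXiv:2510.24548 — 4 statements merged into one kernel-verified Lean document; each statement's English description precedes it below -/
import Mathlib

section
/- Let ρ : ℝ³ → ℝ be smooth with compact support and let k ∈ ℕ. For every smooth compactly supported φ : ℝ⁴ → ℝ there exists a constant C > 0 such that for all ε with 0 < ε ≤ 1 one has | ∫_{ℝ⁴} ε^{−3} ρ(z/ε) φ(σ, z) dσ d³z − Σ_{r=0}^{k} (ε^r / r!) Σ_{a₁,…,a_r=1}^{3} ( ∫_{ℝ³} w^{a₁}⋯w^{a_r} ρ(w) d³w ) ( ∫_ℝ (∂_{a₁}⋯∂_{a_r} φ)(σ, 0) dσ ) | ≤ C ε^{k+1}. (Equivalently: the squeezed regular dust distribution ε^{−3}ρ(z/ε) agrees, to order ε^{k}, with the order-k dust multipole whose moments are Y^{a₁…a_r} = ((−1)^r/m)∫ z^{a₁}⋯z^{a_r} ρ(z) d³z, with error O(ε^{k+1}).) -/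
/-!
The substitution `z = ε w` turns the squeezed integral into
`∫∫ ρ(w) φ(σ, ε w) dw dσ` (`integral_squeezed`). Taylor's theorem in the direction of the spatial
vector `ε w` at the worldline point `(σ, 0)`, with the derivatives expanded by multilinearity into
iterated partial derivatives, bounds the difference between `φ(σ, ε w)` and its Taylor polynomial
of degree `k` by `M ε^{k+1} ‖w‖^{k+1}`, where `M` does not depend on `σ`
(`abs_sub_taylor_le`). The difference vanishes for `σ` outside a bounded interval because `φ` has
compact support (`abs_mul_taylor_remainder_le`). Integrating against `ρ` gives the error
`O(ε^{k+1})`, and by Fubini the integral of each Taylor term is the product of a moment of `ρ`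
and a worldline integral of a derivative of `φ`.
-/

open MeasureTheory

noncomputable section

/-- Standard basis vector `e_μ` of `ℝ⁴`. -/
def e4 (μ : Fin 4) : Fin 4 → ℝ := fun ν => if ν = μ then 1 else 0

/-- Embedding of Latin (spatial) indices `{1,2,3}` into `{0,1,2,3}`. -/
def sp (a : Fin 3) : Fin 4 := a.succ

/-- The point `(σ,0,0,0)` on the worldline. -/
def pt (σ : ℝ) : Fin 4 → ℝ := fun μ => if μ = 0 then σ else 0

/-- Iterated spatial partial derivative `∂_{a₁}⋯∂_{a_r} ψ`. -/
def pderivs (r : ℕ) (a : Fin r → Fin 3) (ψ : (Fin 4 → ℝ) → ℝ) (x : Fin 4 → ℝ) : ℝ :=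
  iteratedFDeriv ℝ r ψ x (fun i => e4 (sp (a i)))

/-- The purely spatial vector `(0, z)` of `ℝ⁴`. -/
def spatialVec (z : Fin 3 → ℝ) : Fin 4 → ℝ := ∑ a, z a • e4 (sp a)

lemma spatialVec_zero (z : Fin 3 → ℝ) : spatialVec z 0 = 0 := by
  simp [spatialVec, e4, sp, Finset.sum_apply, (Fin.succ_ne_zero _).symm]

lemma spatialVec_sp (z : Fin 3 → ℝ) (a : Fin 3) : spatialVec z (sp a) = z a := by
  simp [spatialVec, e4, sp, Finset.sum_apply]

lemma norm_spatialVec_le (z : Fin 3 → ℝ) : ‖spatialVec z‖ ≤ ‖z‖ := by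
  refine (pi_norm_le_iff_of_nonneg (norm_nonneg z)).2 fun μ => ?_
  refine Fin.cases ?_ (fun a => ?_) μ
  · simp [spatialVec_zero]
  · change ‖spatialVec z (sp a)‖ ≤ _
    rw [spatialVec_sp]
    exact norm_le_pi_norm z a

lemma cons_eq_pt_add (σ ε : ℝ) (w : Fin 3 → ℝ) :
    (Fin.cons σ (ε • w) : Fin 4 → ℝ) = pt σ + ε • spatialVec w := by
  funext μ
  refine Fin.cases ?_ (fun a => ?_) μ
  · simp [pt, spatialVec_zero]
  · have h := spatialVec_sp w a
    simp only [sp] at h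
    simp [pt, h]

lemma continuous_pt : Continuous pt := by
  refine continuous_pi fun μ => ?_
  by_cases h : μ = 0 <;> simp [pt, h] <;> fun_prop

lemma continuous_spatialVec : Continuous spatialVec := by
  unfold spatialVec
  fun_prop

/-- The `r`-th derivative along a spatial vector, expanded in iterated partial derivatives. -/
lemma iteratedFDeriv_spatialVec (φ : (Fin 4 → ℝ) → ℝ) (x : Fin 4 → ℝ) (r : ℕ) (ε : ℝ)
    (w : Fin 3 → ℝ) :
    iteratedFDeriv ℝ r φ x (fun _ => ε • spatialVec w) =
      ε ^ r * ∑ a : Fin r → Fin 3, (∏ i, w (a i)) * pderivs r a φ x := by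
  rw [ContinuousMultilinearMap.map_smul_univ (iteratedFDeriv ℝ r φ x) (fun _ => ε)
    (fun _ => spatialVec w)]
  simp only [spatialVec, Finset.prod_const, Finset.card_univ, Fintype.card_fin, smul_eq_mul]
  rw [ContinuousMultilinearMap.map_sum]
  congr 1
  refine Finset.sum_congr rfl fun a _ => ?_
  rw [ContinuousMultilinearMap.map_smul_univ (iteratedFDeriv ℝ r φ x) (fun i => w (a i))
    (fun i => e4 (sp (a i)))]
  rfl

/-- The degree-`k` Taylor polynomial of `φ` at `(σ, 0)` in the spatial directions, evaluated at the
displacement `ε w`. -/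
def taylorPoly (k : ℕ) (φ : (Fin 4 → ℝ) → ℝ) (ε σ : ℝ) (w : Fin 3 → ℝ) : ℝ :=
  ∑ r ∈ Finset.range (k + 1), (ε ^ r / (Nat.factorial r : ℝ)) *
    ∑ a : Fin r → Fin 3, (∏ i, w (a i)) * pderivs r a φ (pt σ)

lemma abs_sub_taylor_le {φ : (Fin 4 → ℝ) → ℝ} (hφs : ContDiff ℝ (⊤ : ℕ∞) φ) {k : ℕ} {M : ℝ}
    (hM : ∀ x, ‖iteratedFDeriv ℝ (k + 1) φ x‖ ≤ M) {ε : ℝ} (hε : 0 ≤ ε) (σ : ℝ)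
    (w : Fin 3 → ℝ) :
    |φ (Fin.cons σ (ε • w)) - taylorPoly k φ ε σ w| ≤ M * (ε ^ (k + 1) * ‖w‖ ^ (k + 1)) := by
  have hM0 : 0 ≤ M := (norm_nonneg _).trans (hM 0)
  have hT := map_add_eq_sum_add_integral_iteratedFDeriv (f := φ) (x := pt σ)
    (y := ε • spatialVec w) (n := k)
    (fun t _ => (hφs.of_le (by exact_mod_cast le_top)).contDiffAt)
  have hP : taylorPoly k φ ε σ w = ∑ r ∈ Finset.range (k + 1), (Nat.factorial r : ℝ)⁻¹ •
      iteratedFDeriv ℝ r φ (pt σ) (fun _ => ε • spatialVec w) := by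
    unfold taylorPoly
    refine Finset.sum_congr rfl fun r _ => ?_
    rw [iteratedFDeriv_spatialVec, smul_eq_mul]
    ring
  rw [cons_eq_pt_add, hT, hP, add_sub_cancel_left, ← Real.norm_eq_abs, norm_smul]
  have hB : ‖∫ t in (0 : ℝ)..1, (1 - t) ^ k • iteratedFDeriv ℝ (k + 1) φ
      (pt σ + t • ε • spatialVec w) (fun _ => ε • spatialVec w)‖ ≤
      M * (ε ^ (k + 1) * ‖w‖ ^ (k + 1)) * |1 - 0| := by
    refine intervalIntegral.norm_integral_le_of_norm_le_const fun t ht => ?_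
    rw [Set.uIoc_of_le zero_le_one] at ht
    rw [norm_smul]
    have h1 : ‖(1 - t) ^ k‖ ≤ 1 := by
      rw [norm_pow, Real.norm_eq_abs, abs_of_nonneg (by linarith [ht.2])]
      exact pow_le_one₀ (by linarith [ht.2]) (by linarith [ht.1])
    have h2 : ‖iteratedFDeriv ℝ (k + 1) φ (pt σ + t • ε • spatialVec w)
        (fun _ => ε • spatialVec w)‖ ≤ M * (ε ^ (k + 1) * ‖w‖ ^ (k + 1)) := by
      refine (ContinuousMultilinearMap.le_opNorm _ _).trans ?_
      rw [Finset.prod_const, Finset.card_univ, Fintype.card_fin, norm_smul, Real.norm_eq_abs,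
        abs_of_nonneg hε, mul_pow]
      gcongr
      · exact hM _
      · exact norm_spatialVec_le w
    exact (mul_le_mul h1 h2 (norm_nonneg _) zero_le_one).trans_eq (one_mul _)
  have hf : ‖(Nat.factorial k : ℝ)⁻¹‖ ≤ 1 := by
    rw [norm_inv, Real.norm_natCast]
    exact inv_le_one_of_one_le₀ (by exact_mod_cast Nat.one_le_iff_ne_zero.2 k.factorial_ne_zero)
  calc _ ≤ 1 * _ := mul_le_mul hf hB (norm_nonneg _) zero_le_one
    _ = _ := by simp

lemma apply_cons_eq_zero {φ : (Fin 4 → ℝ) → ℝ} {S : ℝ}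
    (hS : tsupport φ ⊆ Metric.closedBall 0 S) {σ : ℝ} (hσ : σ ∉ Set.Icc (-S) S)
    (z : Fin 3 → ℝ) : φ (Fin.cons σ z) = 0 := by
  refine image_eq_zero_of_notMem_tsupport fun h => hσ ?_
  have h1 := norm_le_pi_norm (Fin.cons σ z : Fin 4 → ℝ) 0
  have h2 : ‖(Fin.cons σ z : Fin 4 → ℝ)‖ ≤ S := by simpa using hS h
  exact abs_le.1 (h1.trans h2)

lemma pderivs_pt_eq_zero {φ : (Fin 4 → ℝ) → ℝ} {S : ℝ}
    (hS : tsupport φ ⊆ Metric.closedBall 0 S) {σ : ℝ} (hσ : σ ∉ Set.Icc (-S) S)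
    (r : ℕ) (a : Fin r → Fin 3) : pderivs r a φ (pt σ) = 0 := by
  have h0 : iteratedFDeriv ℝ r φ (pt σ) = 0 := by
    by_contra hne
    have h := hS (support_iteratedFDeriv_subset (𝕜 := ℝ) r (Function.mem_support.2 hne))
    have h1 := norm_le_pi_norm (pt σ) 0
    have h2 : ‖pt σ‖ ≤ S := by simpa using h
    exact hσ (abs_le.1 (h1.trans h2))
  simp [pderivs, h0]

/-- The Taylor estimate weighted by `ρ`, with the compact support of `φ` in `σ` made explicit: the
dominating function is integrable in `(σ, w)` and depends on `ε` only through `ε ^ (k + 1)`. -/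
lemma abs_mul_taylor_remainder_le (ρ : (Fin 3 → ℝ) → ℝ) {φ : (Fin 4 → ℝ) → ℝ}
    (hφs : ContDiff ℝ (⊤ : ℕ∞) φ) {k : ℕ} {M S : ℝ}
    (hM : ∀ x, ‖iteratedFDeriv ℝ (k + 1) φ x‖ ≤ M)
    (hS : tsupport φ ⊆ Metric.closedBall 0 S) {ε : ℝ} (hε : 0 ≤ ε) (σ : ℝ) (w : Fin 3 → ℝ) :
    |ρ w * φ (Fin.cons σ (ε • w)) - ρ w * taylorPoly k φ ε σ w| ≤
      ε ^ (k + 1) * ((Set.Icc (-S) S).indicator (fun _ => M) σ * (|ρ w| * ‖w‖ ^ (k + 1))) := by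
  rw [← mul_sub, abs_mul]
  by_cases hσ : σ ∈ Set.Icc (-S) S
  · rw [Set.indicator_of_mem hσ]
    calc _ ≤ |ρ w| * (M * (ε ^ (k + 1) * ‖w‖ ^ (k + 1))) :=
          mul_le_mul_of_nonneg_left (abs_sub_taylor_le hφs hM hε σ w) (abs_nonneg _)
      _ = _ := by ring
  · rw [Set.indicator_of_notMem hσ, apply_cons_eq_zero hS hσ]
    simp [taylorPoly, pderivs_pt_eq_zero hS hσ]

lemma integrable_pderivs_pt {φ : (Fin 4 → ℝ) → ℝ} (hφs : ContDiff ℝ (⊤ : ℕ∞) φ) {S : ℝ}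
    (hS : tsupport φ ⊆ Metric.closedBall 0 S) (r : ℕ) (a : Fin r → Fin 3) :
    Integrable (fun σ : ℝ => pderivs r a φ (pt σ)) := by
  refine Continuous.integrable_of_hasCompactSupport ?_
    (HasCompactSupport.intro (isCompact_Icc (a := -S) (b := S))
      fun σ hσ => pderivs_pt_eq_zero hS hσ r a)
  have h := (hφs.continuous_iteratedFDeriv (m := r) (by exact_mod_cast le_top)).comp continuous_pt
  exact (ContinuousMultilinearMap.apply ℝ (fun _ : Fin r => Fin 4 → ℝ) ℝ
    (fun i => e4 (sp (a i)))).continuous.comp h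

lemma integrable_moment {ρ : (Fin 3 → ℝ) → ℝ} (hρ : Continuous ρ) (hρc : HasCompactSupport ρ)
    (r : ℕ) (a : Fin r → Fin 3) :
    Integrable (fun w : Fin 3 → ℝ => (∏ i : Fin r, w (a i)) * ρ w) :=
  Continuous.integrable_of_hasCompactSupport (by fun_prop) hρc.mul_left

lemma integrable_scaled {ρ : (Fin 3 → ℝ) → ℝ} (hρ : Continuous ρ) (hρc : HasCompactSupport ρ)
    {φ : (Fin 4 → ℝ) → ℝ} (hφ : Continuous φ) {S : ℝ}
    (hS : tsupport φ ⊆ Metric.closedBall 0 S) (ε : ℝ) :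
    Integrable (fun p : ℝ × (Fin 3 → ℝ) => ρ p.2 * φ (Fin.cons p.1 (ε • p.2))) := by
  refine Continuous.integrable_of_hasCompactSupport ?_
    (HasCompactSupport.intro ((isCompact_Icc (a := -S) (b := S)).prod hρc.isCompact)
      fun p hp => ?_)
  · refine (hρ.comp continuous_snd).mul (hφ.comp ?_)
    simp only [cons_eq_pt_add]
    exact (continuous_pt.comp continuous_fst).add
      ((continuous_spatialVec.comp continuous_snd).const_smul ε)
  · by_cases hσ : p.1 ∈ Set.Icc (-S) S
    · have : p.2 ∉ tsupport ρ := fun h => hp ⟨hσ, h⟩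
      simp [image_eq_zero_of_notMem_tsupport this]
    · simp [apply_cons_eq_zero hS hσ]

/-- Splitting `ℝ⁴` into time and space, and substituting `z = ε w` in space. -/
lemma integral_squeezed {ρ : (Fin 3 → ℝ) → ℝ} (hρ : Continuous ρ) (hρc : HasCompactSupport ρ)
    {φ : (Fin 4 → ℝ) → ℝ} (hφ : Continuous φ) (hφc : HasCompactSupport φ) {S : ℝ}
    (hS : tsupport φ ⊆ Metric.closedBall 0 S) {ε : ℝ} (hε : 0 < ε) :
    ∫ x : Fin 4 → ℝ, ε ^ (-3 : ℤ) * ρ (fun a => x (sp a) / ε) * φ x =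
      ∫ p : ℝ × (Fin 3 → ℝ), ρ p.2 * φ (Fin.cons p.1 (ε • p.2)) := by
  set F : (Fin 4 → ℝ) → ℝ := fun x => ε ^ (-3 : ℤ) * ρ (fun a => x (sp a) / ε) * φ x with hF
  have hFi : Integrable F :=
    Continuous.integrable_of_hasCompactSupport (by fun_prop) hφc.mul_left
  have hmp := (volume_preserving_piFinSuccAbove (fun _ : Fin 4 => ℝ) 0).symm
  have hcons : ∀ p : ℝ × (Fin 3 → ℝ),
      (MeasurableEquiv.piFinSuccAbove (fun _ : Fin 4 => ℝ) 0).symm p = Fin.cons p.1 p.2 := by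
    intro p
    simp only [MeasurableEquiv.piFinSuccAbove, Fin.insertNthEquiv_zero]
    rfl
  have h1 : ∫ x, F x = ∫ p : ℝ × (Fin 3 → ℝ), F (Fin.cons p.1 p.2) := by
    rw [← hmp.integral_comp (MeasurableEquiv.measurableEmbedding _)]
    exact integral_congr_ae (Filter.Eventually.of_forall fun p => by simp only [hcons])
  have hFi' : Integrable (fun p : ℝ × (Fin 3 → ℝ) => F (Fin.cons p.1 p.2)) := by
    have := (hmp.integrable_comp_emb (MeasurableEquiv.measurableEmbedding _)).2 hFi
    refine this.congr (Filter.Eventually.of_forall fun p => ?_)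
    simp only [Function.comp, hcons]
  rw [h1, Measure.volume_eq_prod, integral_prod _ hFi',
    integral_prod _ (integrable_scaled hρ hρc hφ hS ε)]
  refine integral_congr_ae (Filter.Eventually.of_forall fun σ => ?_)
  have hsub := Measure.integral_comp_smul_of_nonneg (volume : Measure (Fin 3 → ℝ))
    (fun z => F (Fin.cons σ z)) ε (hR := hε.le)
  have hpt : ∀ w : Fin 3 → ℝ, F (Fin.cons σ (ε • w)) =
      (ε ^ 3)⁻¹ * (ρ w * φ (Fin.cons σ (ε • w))) := by
    intro w
    have : (fun a => (Fin.cons σ (ε • w) : Fin 4 → ℝ) (sp a) / ε) = w := by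
      funext a
      simp [sp, hε.ne']
    simp only [hF, this]
    rw [mul_assoc]
    rfl
  simp only [hpt, integral_const_mul, Module.finrank_fin_fun, smul_eq_mul] at hsub
  exact (mul_left_cancel₀ (inv_ne_zero (pow_ne_zero 3 hε.ne')) hsub).symm

/-- Integrating `ρ` times the Taylor polynomial gives the multipole sum. -/
lemma integral_taylorPoly {ρ : (Fin 3 → ℝ) → ℝ} (hρ : Continuous ρ)
    (hρc : HasCompactSupport ρ) {φ : (Fin 4 → ℝ) → ℝ} (hφs : ContDiff ℝ (⊤ : ℕ∞) φ) {S : ℝ}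
    (hS : tsupport φ ⊆ Metric.closedBall 0 S) (k : ℕ) (ε : ℝ) :
    Integrable (fun p : ℝ × (Fin 3 → ℝ) => ρ p.2 * taylorPoly k φ ε p.1 p.2) ∧
    ∫ p : ℝ × (Fin 3 → ℝ), ρ p.2 * taylorPoly k φ ε p.1 p.2 =
      ∑ r ∈ Finset.range (k + 1), (ε ^ r / (Nat.factorial r : ℝ)) *
        ∑ a : Fin r → Fin 3,
          (∫ w : Fin 3 → ℝ, (∏ i : Fin r, w (a i)) * ρ w) *
          (∫ σ : ℝ, pderivs r a φ (pt σ)) := by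
  have hexp : ∀ p : ℝ × (Fin 3 → ℝ), ρ p.2 * taylorPoly k φ ε p.1 p.2 =
      ∑ r ∈ Finset.range (k + 1), (ε ^ r / (Nat.factorial r : ℝ)) *
        ∑ a : Fin r → Fin 3, pderivs r a φ (pt p.1) * ((∏ i : Fin r, p.2 (a i)) * ρ p.2) := by
    intro p
    simp only [taylorPoly, Finset.mul_sum]
    refine Finset.sum_congr rfl fun r _ => Finset.sum_congr rfl fun a _ => ?_
    ring
  have hint : ∀ (r : ℕ) (a : Fin r → Fin 3), Integrable (fun p : ℝ × (Fin 3 → ℝ) =>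
      pderivs r a φ (pt p.1) * ((∏ i : Fin r, p.2 (a i)) * ρ p.2)) := fun r a =>
    (integrable_pderivs_pt hφs hS r a).mul_prod (integrable_moment hρ hρc r a)
  have hint' : ∀ r : ℕ, Integrable (fun p : ℝ × (Fin 3 → ℝ) =>
      (ε ^ r / (Nat.factorial r : ℝ)) * ∑ a : Fin r → Fin 3,
        pderivs r a φ (pt p.1) * ((∏ i : Fin r, p.2 (a i)) * ρ p.2)) := fun r =>
    (integrable_finsetSum _ fun a _ => hint r a).const_mul _
  simp only [hexp]
  refine ⟨integrable_finsetSum _ fun r _ => hint' r, ?_⟩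
  rw [integral_finsetSum _ fun r _ => hint' r]
  refine Finset.sum_congr rfl fun r _ => ?_
  rw [integral_const_mul, integral_finsetSum _ fun a _ => hint r a]
  congr 1
  refine Finset.sum_congr rfl fun a _ => ?_
  rw [mul_comm (∫ w : Fin 3 → ℝ, _)]
  exact integral_prod_mul (fun σ => pderivs r a φ (pt σ))
    (fun w : Fin 3 → ℝ => (∏ i : Fin r, w (a i)) * ρ w)

/-- Squeezing a regular dust density onto the worldline agrees with the order-`k`
dust multipole with moments `∫ w^{a₁}⋯w^{a_r} ρ(w) d³w`, with error `O(ε^{k+1})`. -/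
theorem squeezed_dust_multipole_expansion
    (ρ : (Fin 3 → ℝ) → ℝ) (hρs : ContDiff ℝ (⊤ : ℕ∞) ρ) (hρc : HasCompactSupport ρ)
    (k : ℕ)
    (φ : (Fin 4 → ℝ) → ℝ) (hφs : ContDiff ℝ (⊤ : ℕ∞) φ) (hφc : HasCompactSupport φ) :
    ∃ C : ℝ, 0 < C ∧ ∀ ε : ℝ, 0 < ε → ε ≤ 1 →
      |(∫ x : Fin 4 → ℝ, ε ^ (-3 : ℤ) * ρ (fun a => x (sp a) / ε) * φ x) -
        ∑ r ∈ Finset.range (k + 1), (ε ^ r / (Nat.factorial r : ℝ)) *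
          ∑ a : Fin r → Fin 3,
            (∫ w : Fin 3 → ℝ, (∏ i : Fin r, w (a i)) * ρ w) *
            (∫ σ : ℝ, pderivs r a φ (pt σ))|
      ≤ C * ε ^ (k + 1) := by
  obtain ⟨M, hM⟩ := (hφs.continuous_iteratedFDeriv (m := k + 1)
    (by exact_mod_cast le_top)).bounded_above_of_compact_support
      (hφc.iteratedFDeriv (𝕜 := ℝ) (k + 1))
  obtain ⟨S, hS⟩ := hφc.isCompact.isBounded.subset_closedBall (0 : Fin 4 → ℝ)
  have hρ := hρs.continuous
  set G : ℝ × (Fin 3 → ℝ) → ℝ := fun p =>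
    (Set.Icc (-S) S).indicator (fun _ => M) p.1 * (|ρ p.2| * ‖p.2‖ ^ (k + 1)) with hG
  have hGi : Integrable G := by
    refine Integrable.mul_prod (f := (Set.Icc (-S) S).indicator (fun _ => M))
      (g := fun w => |ρ w| * ‖w‖ ^ (k + 1)) ?_ ?_
    · exact (integrable_indicator_iff measurableSet_Icc).2
        (integrableOn_const (by simp [Real.volume_Icc]))
    · exact Continuous.integrable_of_hasCompactSupport (by fun_prop) hρc.norm.mul_right
  refine ⟨|∫ p, G p| + 1, by positivity, fun ε hε _ => ?_⟩
  obtain ⟨hTi, hT⟩ := integral_taylorPoly hρ hρc hφs hS k ε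
  rw [integral_squeezed hρ hρc hφs.continuous hφc hS hε, ← hT,
    ← integral_sub (integrable_scaled hρ hρc hφs.continuous hS ε) hTi, ← Real.norm_eq_abs]
  calc _ ≤ ∫ p, ε ^ (k + 1) * G p :=
        norm_integral_le_of_norm_le (hGi.const_mul _) (Filter.Eventually.of_forall fun p =>
          abs_mul_taylor_remainder_le ρ hφs hM hS hε.le p.1 p.2)
    _ = (∫ p, G p) * ε ^ (k + 1) := by rw [integral_const_mul, mul_comm]
    _ ≤ _ := by
        gcongr
        linarith [le_abs_self (∫ p, G p)]

end
end

section
/- Fix k ∈ ℕ, m ∈ ℝ, real constants Y^{a₁…a_r} for 0 ≤ r ≤ k and a₁,…,a_r ∈ {1,2,3} (with the r = 0 constant equal to 1), and smooth functions Γ^ρ_{μν} : ℝ⁴ → ℝ (μ,ν,ρ ∈ {0,1,2,3}) such that Γ^μ_{00}(x) = 0 for all x ∈ ℝ⁴ and all μ. Then the uncharged dust multipole stress-energy distribution T^{μν} = m δ^μ_0 δ^ν_0 Σ_{r=0}^{k} (1/r!) Σ_{a₁,…,a_r} Y^{a₁…a_r} ∂_{a₁}⋯∂_{a_r} δ³(z)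 is divergence-free: for every test covector field θ : ℝ⁴ → ℝ⁴ (components θ_ν), Σ_{r=0}^{k} ((−1)^r/r!) m Σ_{a₁,…,a_r=1}^{3} Y^{a₁…a_r} ∫_ℝ ( ∂_{a₁}⋯∂_{a_r}[ Σ_ρ Γ^ρ_{00} θ_ρ − ∂_0 θ_0 ] )(σ, 0) dσ = 0. -/
/-!
Since `Γ^ρ₀₀ = 0`, the test function paired with the multipole is `∂₀ g` with `g = -θ₀` smooth and
compactly supported. Partial derivatives commute (`iteratedFDeriv_fderiv_apply_comm`), so on the
worldline `∂_{a₁}⋯∂_{a_r} ∂₀ g` is the `σ`-derivative of the compactly supported function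
`σ ↦ (∂_{a₁}⋯∂_{a_r} g)(σ, 0)`, and its integral over `ℝ` is zero (`integral_pderivs_pd_zero`).
Every term of the sum therefore vanishes separately.
-/

open MeasureTheory

noncomputable section

/-- Partial derivative `∂_μ ψ`. -/
def pd (μ : Fin 4) (ψ : (Fin 4 → ℝ) → ℝ) : (Fin 4 → ℝ) → ℝ :=
  fun x => fderiv ℝ ψ x (e4 μ)

lemma contDiff_iteratedFDeriv_apply {g : (Fin 4 → ℝ) → ℝ} (hg : ContDiff ℝ (⊤ : ℕ∞) g)
    (r : ℕ) (v : Fin r → Fin 4 → ℝ) :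
    ContDiff ℝ (⊤ : ℕ∞) (fun y => iteratedFDeriv ℝ r g y v) :=
  (ContinuousMultilinearMap.apply ℝ (fun _ : Fin r => Fin 4 → ℝ) ℝ v).contDiff.comp
    (hg.iteratedFDeriv_right (m := (⊤ : ℕ∞)) (by exact_mod_cast le_top))

/-- Directional derivatives of a smooth function commute: differentiating along `w` first and then
along `v 0, …, v (r - 1)` is the same as differentiating along `w` last. The induction step is the
symmetry of the second derivative. -/
lemma iteratedFDeriv_fderiv_apply_comm {g : (Fin 4 → ℝ) → ℝ} (hg : ContDiff ℝ (⊤ : ℕ∞) g)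
    (w : Fin 4 → ℝ) (r : ℕ) (v : Fin r → Fin 4 → ℝ) (x : Fin 4 → ℝ) :
    iteratedFDeriv ℝ r (fun y => fderiv ℝ g y w) x v =
      fderiv ℝ (fun y => iteratedFDeriv ℝ r g y v) x w := by
  induction r generalizing x with
  | zero => simp
  | succ r ih =>
    have hg' : ContDiff ℝ (⊤ : ℕ∞) (fun y => fderiv ℝ g y w) :=
      (hg.fderiv_right (by simp)).clm_apply contDiff_const
    have hd : ∀ {f : (Fin 4 → ℝ) → ℝ}, ContDiff ℝ (⊤ : ℕ∞) f → ∀ y,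
        iteratedFDeriv ℝ (r + 1) f y v =
          fderiv ℝ (fun z => iteratedFDeriv ℝ r f z (Fin.tail v)) y (v 0) := fun hf y =>
      DifferentiableAt.iteratedFDeriv_succ_apply_left'
        (hf.differentiable_iteratedFDeriv (by exact_mod_cast WithTop.coe_lt_top r) y)
    have hH : ContDiff ℝ (⊤ : ℕ∞) (fun z => iteratedFDeriv ℝ r g z (Fin.tail v)) :=
      contDiff_iteratedFDeriv_apply hg r _
    rw [hd hg']
    simp_rw [hd hg, ih]
    have hdiff : DifferentiableAt ℝ
        (fderiv ℝ (fun z => iteratedFDeriv ℝ r g z (Fin.tail v))) x :=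
      (hH.fderiv_right (m := (⊤ : ℕ∞)) (by simp)).differentiable (by simp) x
    rw [fderiv_clm_apply hdiff (by fun_prop), fderiv_clm_apply hdiff (by fun_prop)]
    have htwo : minSmoothness ℝ 2 ≤ ((⊤ : ℕ∞) : WithTop ℕ∞) := by
      rw [minSmoothness_of_isRCLikeNormedField]
      exact WithTop.coe_le_coe.2 (le_top (a := (2 : ℕ∞)))
    simpa using (hH.contDiffAt.isSymmSndFDerivAt htwo).eq (v 0) w

lemma hasDerivAt_pt (σ : ℝ) : HasDerivAt pt (e4 0) σ := by
  rw [hasDerivAt_pi]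
  intro μ
  by_cases h : μ = 0
  · simpa [pt, e4, h] using hasDerivAt_id' σ
  · simpa [pt, e4, h] using hasDerivAt_const σ (0 : ℝ)

lemma isClosedEmbedding_pt : Topology.IsClosedEmbedding pt := by
  have hcont : Continuous pt :=
    continuous_iff_continuousAt.2 fun σ => (hasDerivAt_pt σ).continuousAt
  exact Function.LeftInverse.isClosedEmbedding (f := fun x : Fin 4 → ℝ => x 0)
    (fun σ => by simp [pt]) (continuous_apply 0) hcont

/-- Along the worldline, `∂_{a₁}⋯∂_{a_r} ∂₀ g` is the `σ`-derivative of the compactly supported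
function `∂_{a₁}⋯∂_{a_r} g`, so its integral vanishes. -/
lemma integral_pderivs_pd_zero {g : (Fin 4 → ℝ) → ℝ} (hg : ContDiff ℝ (⊤ : ℕ∞) g)
    (hc : HasCompactSupport g) (r : ℕ) (a : Fin r → Fin 3) :
    ∫ σ : ℝ, pderivs r a (pd 0 g) (pt σ) = 0 := by
  set H : (Fin 4 → ℝ) → ℝ := pderivs r a g with hHdef
  have hH : ContDiff ℝ (⊤ : ℕ∞) H := contDiff_iteratedFDeriv_apply hg r _
  have hHc : HasCompactSupport H :=
    (hc.iteratedFDeriv (𝕜 := ℝ) r).comp_left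
      (g := fun L : ContinuousMultilinearMap ℝ (fun _ : Fin r => Fin 4 → ℝ) ℝ =>
        L (fun i => e4 (sp (a i)))) rfl
  have heq : ∀ σ, pderivs r a (pd 0 g) (pt σ) = fderiv ℝ H (pt σ) (e4 0) := fun σ =>
    iteratedFDeriv_fderiv_apply_comm hg (e4 0) r _ (pt σ)
  simp_rw [heq]
  have hcont : Continuous pt := isClosedEmbedding_pt.continuous
  refine integral_eq_zero_of_hasDerivAt_of_integrable (f := fun σ => H (pt σ)) (fun σ => ?_) ?_ ?_
  · exact ((hH.differentiable (by simp) (pt σ)).hasFDerivAt).comp_hasDerivAt σ (hasDerivAt_pt σ)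
  · refine Continuous.integrable_of_hasCompactSupport ?_ ?_
    · exact ((hH.continuous_fderiv (by simp)).comp hcont).clm_apply continuous_const
    · exact (hHc.fderiv_apply (𝕜 := ℝ) (e4 0)).comp_isClosedEmbedding isClosedEmbedding_pt
  · exact (hH.continuous.comp hcont).integrable_of_hasCompactSupport
      (hHc.comp_isClosedEmbedding isClosedEmbedding_pt)

/-- The uncharged dust multipole stress-energy distribution
`T^{μν} = m δ^μ₀ δ^ν₀ Σ_r (1/r!) Y^{a₁…a_r} ∂_{a₁}⋯∂_{a_r} δ³(z)`
is divergence-free in coordinates adapted to the geodesic congruence (`Γ^μ₀₀ = 0`):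
its pairing with `Γ^ρ_{μν}θ_ρ − ∂_μθ_ν` vanishes for every test covector `θ`. -/
theorem uncharged_dust_multipole_divergence_free
    (k : ℕ) (m : ℝ)
    (Y : (r : ℕ) → (Fin r → Fin 3) → ℝ)
    (hY0 : ∀ a : Fin 0 → Fin 3, Y 0 a = 1)
    (Γ : Fin 4 → Fin 4 → Fin 4 → (Fin 4 → ℝ) → ℝ)
    (hΓs : ∀ ρ μ ν, ContDiff ℝ (⊤ : ℕ∞) (Γ ρ μ ν))
    (hΓ00 : ∀ μ x, Γ μ 0 0 x = 0)
    (θ : (Fin 4 → ℝ) → Fin 4 → ℝ)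
    (hθs : ContDiff ℝ (⊤ : ℕ∞) θ) (hθc : HasCompactSupport θ) :
    ∑ r ∈ Finset.range (k + 1), ((-1 : ℝ) ^ r / (Nat.factorial r : ℝ)) * m *
      ∑ a : Fin r → Fin 3, Y r a *
        ∫ σ : ℝ, pderivs r a
          (fun x => (∑ ρ : Fin 4, Γ ρ 0 0 x * θ x ρ) - pd 0 (fun y => θ y 0) x) (pt σ)
    = 0 := by
  refine Finset.sum_eq_zero fun r _ => ?_
  rw [Finset.sum_eq_zero, mul_zero]
  intro a _
  have hg : ContDiff ℝ (⊤ : ℕ∞) (fun y => -θ y 0) := (contDiff_pi.1 hθs 0).neg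
  have hc : HasCompactSupport (fun y => -θ y 0) :=
    hθc.comp_left (g := fun u : Fin 4 → ℝ => -u 0) (by simp)
  have hfun : (fun x => (∑ ρ : Fin 4, Γ ρ 0 0 x * θ x ρ) - pd 0 (fun y => θ y 0) x) =
      pd 0 (fun y => -θ y 0) := by
    funext x
    simp [hΓ00, pd, fderiv_fun_neg]
  rw [hfun, integral_pderivs_pd_zero hg hc, mul_zero]

end
end

section
/- Fix m ∈ ℝ, real constants Y^a and Y^{ab} = Y^{ba} (a,b ∈ {1,2,3}), and smooth functions Γ^ρ_{μν} : ℝ⁴ → ℝ with Γ^μ_{00}(x) = 0 for all x ∈ ℝ⁴ and all μ. Define the constant quadrupole components χ^{μν} := m δ^μ_0 δ^ν_0, χ^{μνa} := m δ^μ_0 δ^ν_0 Y^a, χ^{μνab} := m δ^μ_0 δ^ν_0 Y^{ab}. Then for every σ ∈ ℝ, with Γ and its derivatives evaluated at (σ,0,0,0): (i) dχ^{μ0}/dσ = − Σ_{ν,ρ} Γ^μ_{νρ} χ^{ρν} + Σ_{ν,ρ,a} (∂_a Γ^μ_{νρ}) χ^{ρνa} − ½ Σ_{ν,ρ,a,b}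 (∂_b ∂_a Γ^μ_{νρ}) χ^{ρνab}; (ii) dχ^{μ0a}/dσ = − χ^{μa} − Σ_{ν,ρ} Γ^μ_{νρ} χ^{ρνa} + Σ_{ν,ρ,b} (∂_b Γ^μ_{νρ}) χ^{ρνba}; (iii) dχ^{μ0ab}/dσ = − (χ^{μba} + χ^{μab}) − Σ_{ν,ρ} Γ^μ_{νρ} χ^{ρνab}; (iv) the total symmetrization of χ^{μabc} over the indices a,b,c vanishes. That is, the uncharged dust quadrupole satisfies the quadrupole stress-energy equations. -/
/-!
The components are constant in `σ`, so every left-hand side vanishes. On the right, the factor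
`δ^ρ₀ δ^ν₀` keeps only the terms with `Γ^μ₀₀` or its derivatives, which vanish because `Γ^μ₀₀` is
identically zero, while components with a spatial second index vanish since `δ^a₀ = 0`.
-/

open MeasureTheory

noncomputable section

/-- Kronecker delta on `Fin 4`. -/
def kron (μ ν : Fin 4) : ℝ := if μ = ν then 1 else 0

/-- The uncharged dust quadrupole components `χ^{μν} = m δ^μ₀δ^ν₀`,
`χ^{μνa} = m δ^μ₀δ^ν₀ Y^a`, `χ^{μνab} = m δ^μ₀δ^ν₀ Y^{ab}` satisfy the quadrupole
stress-energy equations in coordinates adapted to the geodesic congruence (`Γ^μ₀₀ = 0`). -/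
theorem uncharged_dust_quadrupole_satisfies_equations
    (m : ℝ) (Y1 : Fin 3 → ℝ) (Y2 : Fin 3 → Fin 3 → ℝ)
    (hY2sym : ∀ a b, Y2 a b = Y2 b a)
    (Γ : Fin 4 → Fin 4 → Fin 4 → (Fin 4 → ℝ) → ℝ)
    (hΓs : ∀ ρ μ ν, ContDiff ℝ (⊤ : ℕ∞) (Γ ρ μ ν))
    (hΓ00 : ∀ μ x, Γ μ 0 0 x = 0)
    (χ0 : Fin 4 → Fin 4 → ℝ → ℝ)
    (χ1 : Fin 4 → Fin 4 → Fin 3 → ℝ → ℝ)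
    (χ2 : Fin 4 → Fin 4 → Fin 3 → Fin 3 → ℝ → ℝ)
    (hχ0 : ∀ μ ν σ, χ0 μ ν σ = m * kron μ 0 * kron ν 0)
    (hχ1 : ∀ μ ν a σ, χ1 μ ν a σ = m * kron μ 0 * kron ν 0 * Y1 a)
    (hχ2 : ∀ μ ν a b σ, χ2 μ ν a b σ = m * kron μ 0 * kron ν 0 * Y2 a b) :
    ∀ σ : ℝ,
      (∀ μ, deriv (χ0 μ 0) σ =
          - (∑ ν : Fin 4, ∑ ρ : Fin 4, Γ μ ν ρ (pt σ) * χ0 ρ ν σ)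
          + (∑ ν : Fin 4, ∑ ρ : Fin 4, ∑ a : Fin 3,
              pd (sp a) (Γ μ ν ρ) (pt σ) * χ1 ρ ν a σ)
          - (1/2) * ∑ ν : Fin 4, ∑ ρ : Fin 4, ∑ a : Fin 3, ∑ b : Fin 3,
              pd (sp b) (pd (sp a) (Γ μ ν ρ)) (pt σ) * χ2 ρ ν a b σ) ∧
      (∀ μ a, deriv (fun s => χ1 μ 0 a s) σ =
          - χ0 μ (sp a) σ
          - (∑ ν : Fin 4, ∑ ρ : Fin 4, Γ μ ν ρ (pt σ) * χ1 ρ ν a σ)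
          + ∑ ν : Fin 4, ∑ ρ : Fin 4, ∑ b : Fin 3,
              pd (sp b) (Γ μ ν ρ) (pt σ) * χ2 ρ ν b a σ) ∧
      (∀ μ a b, deriv (fun s => χ2 μ 0 a b s) σ =
          - (χ1 μ (sp b) a σ + χ1 μ (sp a) b σ)
          - ∑ ν : Fin 4, ∑ ρ : Fin 4, Γ μ ν ρ (pt σ) * χ2 ρ ν a b σ) ∧
      (∀ μ a b c,
          χ2 μ (sp a) b c σ + χ2 μ (sp a) c b σ + χ2 μ (sp b) a c σ +
            χ2 μ (sp b) c a σ + χ2 μ (sp c) a b σ + χ2 μ (sp c) b a σ = 0) := by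
  have hΓ : ∀ μ, Γ μ 0 0 = fun _ => 0 := fun μ => funext (hΓ00 μ)
  have hpd : ∀ ν, pd ν (fun _ => 0) = fun _ => 0 := by
    intro ν
    funext x
    simp [pd]
  have hsp : ∀ a, kron (sp a) 0 = 0 := fun a => by simp [kron, sp]
  have hc0 : ∀ μ, χ0 μ 0 = fun _ => m * kron μ 0 * kron 0 0 := fun μ => funext (hχ0 μ 0)
  -- A product with the two deltas survives summation only at `ν = ρ = 0`.
  have hsum : ∀ F : Fin 4 → Fin 4 → ℝ, (∀ ν ρ, ν ≠ 0 ∨ ρ ≠ 0 → F ν ρ = 0) → F 0 0 = 0 →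
      ∑ ν : Fin 4, ∑ ρ : Fin 4, F ν ρ = 0 := by
    intro F h h0
    refine Finset.sum_eq_zero fun ν _ => Finset.sum_eq_zero fun ρ _ => ?_
    by_cases hν : ν = 0
    · by_cases hρ : ρ = 0
      · rw [hν, hρ, h0]
      · exact h ν ρ (Or.inr hρ)
    · exact h ν ρ (Or.inl hν)
  intro σ
  refine ⟨fun μ => ?_, fun μ a => ?_, fun μ a b => ?_, fun μ a b c => ?_⟩
  · rw [hc0, hsum, hsum, hsum]
    · simp
    all_goals first
      | (rintro ν ρ (h | h) <;> simp [hχ0, hχ1, hχ2, kron, h])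
      | simp [hΓ, hpd]
  · simp only [hχ0, hχ1, hχ2, hsp]
    rw [hsum, hsum]
    · simp
    all_goals first
      | (rintro ν ρ (h | h) <;> simp [kron, h])
      | simp [hΓ, hpd]
  · simp only [hχ1, hχ2, hsp]
    rw [hsum]
    · simp
    all_goals first
      | (rintro ν ρ (h | h) <;> simp [kron, h])
      | simp [hΓ]
  · simp [hχ2, hsp]

end
end

section
/- Let χ^{μν}, χ^{μνa}, χ^{μνab} : ℝ → ℝ be smooth functions (μ,ν ∈ {0,1,2,3}, a,b ∈ {1,2,3}) satisfying χ^{μν…} = χ^{νμ…} and χ^{μνab} = χ^{μνba}, and let Γ^ρ_{μν} : ℝ⁴ → ℝ be smooth. Then the following are equivalent. (A) For every test covector field θ : ℝ⁴ → ℝ⁴: Σ_{μ,ν} ∫_ℝ [ χ^{μν}(σ) E_{μν}(σ,0) − Σ_a χ^{μνa}(σ) (∂_a E_{μν})(σ,0) + ½ Σ_{a,b} χ^{μνab}(σ) (∂_a ∂_b E_{μν})(σ,0) ] dσ = 0, where E_{μν} := Σ_ρ Γ^ρ_{μν} θ_ρ − ∂_μ θ_ν. (B) For every σ, with Γ and its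 derivatives evaluated at (σ,0,0,0): dχ^{μ0}/dσ = − Σ Γ^μ_{νρ} χ^{ρν} + Σ (∂_a Γ^μ_{νρ}) χ^{ρνa} − ½ Σ (∂_b ∂_a Γ^μ_{νρ}) χ^{ρνab}; dχ^{μ0a}/dσ = − χ^{μa} − Σ Γ^μ_{νρ} χ^{ρνa} + Σ (∂_b Γ^μ_{νρ}) χ^{ρνba}; dχ^{μ0ab}/dσ = − (χ^{μba} + χ^{μab}) − Σ Γ^μ_{νρ} χ^{ρνab}; and the total symmetrization of χ^{μabc} over a,b,c vanishes. (Condition (A) is the weak form of the divergence-free condition ∇_μ T^{μν} = 0 for the quadrupole stress-energy tensor density.) -/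
/-!
Along the worldline, expand the pairing with `E_{μν} = Γ^ρ_{μν} θ_ρ − ∂_μ θ_ν` by the product rule.
The terms containing `∂_0 θ_ν` become, up to the total `σ`-derivative of
`∑ ρ, ⟨χ^{ρ0}, θ_ρ⟩` (whose integral vanishes by compact support), terms in which the `σ`-derivative
falls on `χ`. What remains is `∑ ρ, jetOp ρ θ_ρ`, an operator in the purely spatial derivatives of
`θ_ρ` of order at most three, whose coefficients `coef0`, `coef1`, `coef2` and `-½ χ^{ρcab}` are the
differences of the two sides of the four families of equations (`sum_pairing_Efield`,
`weak_divergence_eq`).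

If the equations hold, `jetOp` vanishes: the first three coefficients are zero, and the third-order
one is contracted with symmetric third derivatives (`sum_mul_symm_eq_zero`). Conversely, `jetOp`
commutes with multiplication by functions of `σ` alone, so testing with `φ(σ) η(x) f(x)`, with `η` a
cutoff, and the fundamental lemma of the calculus of variations give `jetOp ρ f = 0` pointwise for
every smooth `f` (`jetOp_eq_zero`). Taking `f` among `1`, `z^a`, `z^a z^b`, `z^a z^b z^c` isolates
the symmetrized coefficients (`jetOp_coord_mul`).
-/

open MeasureTheory

noncomputable section

/-- `E_{μν} = Σ_ρ Γ^ρ_{μν} θ_ρ − ∂_μ θ_ν`. -/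
def Efield (Γ : Fin 4 → Fin 4 → Fin 4 → (Fin 4 → ℝ) → ℝ)
    (θ : (Fin 4 → ℝ) → Fin 4 → ℝ) (μ ν : Fin 4) : (Fin 4 → ℝ) → ℝ :=
  fun x => (∑ ρ : Fin 4, Γ ρ μ ν x * θ x ρ) - pd μ (fun y => θ y ν) x

/-! ### Calculus of partial derivatives -/

lemma pd_smooth {f : (Fin 4 → ℝ) → ℝ} (hf : ContDiff ℝ (⊤ : ℕ∞) f) (μ : Fin 4) :
    ContDiff ℝ (⊤ : ℕ∞) (pd μ f) :=
  (hf.fderiv_right (m := ((⊤ : ℕ∞) : WithTop ℕ∞)) (by simp)).clm_apply contDiff_const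

lemma smooth_differentiable {f : (Fin 4 → ℝ) → ℝ} (hf : ContDiff ℝ (⊤ : ℕ∞) f) :
    Differentiable ℝ f := hf.differentiable (by simp)

lemma pd_compact {f : (Fin 4 → ℝ) → ℝ} (hf : HasCompactSupport f) (μ : Fin 4) :
    HasCompactSupport (pd μ f) := hf.fderiv_apply (𝕜 := ℝ) (e4 μ)

lemma pd_comm {f : (Fin 4 → ℝ) → ℝ} (hf : ContDiff ℝ (⊤ : ℕ∞) f) (μ ν : Fin 4) :
    pd μ (pd ν f) = pd ν (pd μ f) := by
  funext x
  have hd : DifferentiableAt ℝ (fderiv ℝ f) x :=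
    ((hf.fderiv_right (m := ((⊤ : ℕ∞) : WithTop ℕ∞)) (by simp)).differentiable (by simp)) x
  have key : ∀ α β : Fin 4, pd α (pd β f) x = fderiv ℝ (fderiv ℝ f) x (e4 α) (e4 β) := by
    intro α β
    change fderiv ℝ (fun y => fderiv ℝ f y (e4 β)) x (e4 α) = _
    rw [fderiv_clm_apply hd (differentiableAt_const _)]
    simp
  rw [key, key]
  exact (hf.contDiffAt.isSymmSndFDerivAt (by simpa using (WithTop.coe_le_coe.2 (le_top : (2 : ℕ∞) ≤ ⊤)))) _ _

lemma pd_sub {f g : (Fin 4 → ℝ) → ℝ} (hf : ContDiff ℝ (⊤ : ℕ∞) f)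
    (hg : ContDiff ℝ (⊤ : ℕ∞) g) (μ : Fin 4) :
    pd μ (fun x => f x - g x) = fun x => pd μ f x - pd μ g x := by
  funext x
  simp only [pd]
  rw [fderiv_fun_sub (smooth_differentiable hf x) (smooth_differentiable hg x)]
  rfl

lemma pd_add {f g : (Fin 4 → ℝ) → ℝ} (hf : ContDiff ℝ (⊤ : ℕ∞) f)
    (hg : ContDiff ℝ (⊤ : ℕ∞) g) (μ : Fin 4) :
    pd μ (fun x => f x + g x) = fun x => pd μ f x + pd μ g x := by
  funext x
  simp only [pd]
  rw [fderiv_fun_add (smooth_differentiable hf x) (smooth_differentiable hg x)]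
  rfl

lemma pd_sum {f : Fin 4 → (Fin 4 → ℝ) → ℝ} (hf : ∀ ρ, ContDiff ℝ (⊤ : ℕ∞) (f ρ))
    (μ : Fin 4) : pd μ (fun x => ∑ ρ, f ρ x) = fun x => ∑ ρ, pd μ (f ρ) x := by
  funext x
  simp only [pd]
  rw [fderiv_fun_sum (fun ρ _ => smooth_differentiable (hf ρ) x)]
  simp

lemma pd_mul {f g : (Fin 4 → ℝ) → ℝ} (hf : ContDiff ℝ (⊤ : ℕ∞) f)
    (hg : ContDiff ℝ (⊤ : ℕ∞) g) (μ : Fin 4) :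
    pd μ (fun x => f x * g x) = fun x => pd μ f x * g x + f x * pd μ g x := by
  funext x
  simp only [pd]
  rw [fderiv_fun_mul (smooth_differentiable hf x) (smooth_differentiable hg x)]
  simp
  ring

lemma pd_const (c : ℝ) (μ : Fin 4) : pd μ (fun _ => c) = fun _ => 0 := by
  funext x
  simp [pd]

lemma pd_coord (μ ν : Fin 4) : pd μ (fun x => x ν) = fun _ => if ν = μ then 1 else 0 := by
  funext x
  simp only [pd]
  rw [(hasFDerivAt_apply (𝕜 := ℝ) ν x).fderiv]
  rfl

lemma pd_time_comp {φ : ℝ → ℝ} (hφ : ContDiff ℝ (⊤ : ℕ∞) φ) (a : Fin 3) :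
    pd (sp a) (fun x => φ (x 0)) = fun _ => 0 := by
  funext x
  have h1 : HasFDerivAt (fun x : Fin 4 → ℝ => x 0)
    (ContinuousLinearMap.proj (R := ℝ) (φ := fun _ : Fin 4 => ℝ) 0) x := hasFDerivAt_apply 0 x
  have h2 := ((hφ.differentiable (by simp)) (x 0)).hasDerivAt.comp_hasFDerivAt x h1
  simp only [pd]
  have h3 := h2.fderiv
  simp only [Function.comp_def] at h3
  rw [h3]
  simp [e4, sp, (Fin.succ_ne_zero a).symm]

/-- Spatial derivatives pass through a factor depending on `σ` only. -/
lemma pd_time_mul {φ : ℝ → ℝ} (hφ : ContDiff ℝ (⊤ : ℕ∞) φ) {f : (Fin 4 → ℝ) → ℝ}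
    (hf : ContDiff ℝ (⊤ : ℕ∞) f) (a : Fin 3) :
    pd (sp a) (fun x => φ (x 0) * f x) = fun x => φ (x 0) * pd (sp a) f x := by
  rw [pd_mul (f := fun x => φ (x 0)) (hφ.comp (contDiff_apply ℝ ℝ (0 : Fin 4))) hf, pd_time_comp hφ]
  simp

lemma pd_congr {f g : (Fin 4 → ℝ) → ℝ} {x : Fin 4 → ℝ} (h : f =ᶠ[nhds x] g) (μ : Fin 4) :
    pd μ f =ᶠ[nhds x] pd μ g :=
  (h.fderiv (𝕜 := ℝ)).mono fun y hy => by simp only [pd, hy]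

lemma pt_smooth : ContDiff ℝ (⊤ : ℕ∞) pt := by
  rw [contDiff_pi]
  intro μ
  by_cases h : μ = 0
  · simpa [pt, h] using contDiff_fun_id
  · simpa [pt, h] using contDiff_const

lemma hasDerivAt_comp_pt {f : (Fin 4 → ℝ) → ℝ} (hf : ContDiff ℝ (⊤ : ℕ∞) f) (σ : ℝ) :
    HasDerivAt (fun s => f (pt s)) (pd 0 f (pt σ)) σ := by
  have h1 : HasDerivAt pt (e4 0) σ := by
    rw [hasDerivAt_pi]
    intro μ
    by_cases h : μ = 0
    · simpa [pt, e4, h] using hasDerivAt_id' σ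
    · simpa [pt, e4, h] using hasDerivAt_const σ (0 : ℝ)
  exact (smooth_differentiable hf (pt σ)).hasFDerivAt.comp_hasDerivAt σ h1

lemma comp_pt_compact {f : (Fin 4 → ℝ) → ℝ} (hf : HasCompactSupport f) :
    HasCompactSupport (fun s => f (pt s)) := by
  refine HasCompactSupport.intro (hf.isCompact.image (continuous_apply (0 : Fin 4))) ?_
  intro s hs
  by_contra h
  exact hs ⟨pt s, subset_tsupport f h, by simp [pt]⟩

lemma integrable_mul_pt {c : ℝ → ℝ} (hc : Continuous c) {f : (Fin 4 → ℝ) → ℝ}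
    (hf : ContDiff ℝ (⊤ : ℕ∞) f) (hs : HasCompactSupport f) :
    Integrable (fun s => c s * f (pt s)) :=
  (hc.mul (hf.continuous.comp pt_smooth.continuous)).integrable_of_hasCompactSupport
    (HasCompactSupport.mul_left (comp_pt_compact hs))

/-! ### The weak divergence as an integrated spatial jet operator -/

section Coefficients

variable (χ0 : Fin 4 → Fin 4 → ℝ → ℝ) (χ1 : Fin 4 → Fin 4 → Fin 3 → ℝ → ℝ)
  (χ2 : Fin 4 → Fin 4 → Fin 3 → Fin 3 → ℝ → ℝ)
  (Γ : Fin 4 → Fin 4 → Fin 4 → (Fin 4 → ℝ) → ℝ)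

/-- Coefficient of `θ_ρ` in the divergence, after integration by parts in `σ`. -/
def coef0 (ρ : Fin 4) (σ : ℝ) : ℝ :=
  deriv (χ0 ρ 0) σ + (∑ μ : Fin 4, ∑ ν : Fin 4, Γ ρ μ ν (pt σ) * χ0 ν μ σ)
    - (∑ μ : Fin 4, ∑ ν : Fin 4, ∑ a : Fin 3, pd (sp a) (Γ ρ μ ν) (pt σ) * χ1 ν μ a σ)
    + (1/2) * ∑ μ : Fin 4, ∑ ν : Fin 4, ∑ a : Fin 3, ∑ b : Fin 3,
        pd (sp b) (pd (sp a) (Γ ρ μ ν)) (pt σ) * χ2 ν μ a b σ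

/-- Coefficient of `∂_a θ_ρ` in the divergence, after integration by parts in `σ`. -/
def coef1 (ρ : Fin 4) (a : Fin 3) (σ : ℝ) : ℝ :=
  -(deriv (χ1 ρ 0 a) σ + χ0 ρ (sp a) σ
    + (∑ μ : Fin 4, ∑ ν : Fin 4, Γ ρ μ ν (pt σ) * χ1 ν μ a σ)
    - ∑ μ : Fin 4, ∑ ν : Fin 4, ∑ b : Fin 3, pd (sp b) (Γ ρ μ ν) (pt σ) * χ2 ν μ b a σ)

/-- Coefficient of `∂_a ∂_b θ_ρ` in the divergence, after integration by parts in `σ`. -/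
def coef2 (ρ : Fin 4) (a b : Fin 3) (σ : ℝ) : ℝ :=
  (1/2) * (deriv (χ2 ρ 0 a b) σ + (χ1 ρ (sp b) a σ + χ1 ρ (sp a) b σ)
    + ∑ μ : Fin 4, ∑ ν : Fin 4, Γ ρ μ ν (pt σ) * χ2 ν μ a b σ)

/-- The third-order operator in the spatial derivatives whose integral along the worldline,
summed over `ρ` with `f = θ_ρ`, is the divergence tested against `θ`. -/
def jetOp (ρ : Fin 4) (f : (Fin 4 → ℝ) → ℝ) (σ : ℝ) : ℝ :=
  coef0 χ0 χ1 χ2 Γ ρ σ * f (pt σ)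
    + (∑ a, coef1 χ0 χ1 χ2 Γ ρ a σ * pd (sp a) f (pt σ))
    + (∑ a, ∑ b, coef2 χ1 χ2 Γ ρ a b σ * pd (sp a) (pd (sp b) f) (pt σ))
    - (1/2) * ∑ a, ∑ b, ∑ c,
        χ2 ρ (sp c) a b σ * pd (sp a) (pd (sp b) (pd (sp c) f)) (pt σ)

/-- The integrand of the pairing of the quadrupole component `(μ, ν)` with a function `E`. -/
def pairing (μ ν : Fin 4) (E : (Fin 4 → ℝ) → ℝ) (σ : ℝ) : ℝ :=
  χ0 μ ν σ * E (pt σ) - ∑ a : Fin 3, χ1 μ ν a σ * pd (sp a) E (pt σ)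
    + (1/2) * ∑ a : Fin 3, ∑ b : Fin 3, χ2 μ ν a b σ * pd (sp a) (pd (sp b) E) (pt σ)

/-- The `σ`-derivative of the pairing of the component `(ρ, 0)` with `f`, by the Leibniz rule. -/
def boundaryDeriv (ρ : Fin 4) (f : (Fin 4 → ℝ) → ℝ) (σ : ℝ) : ℝ :=
  (deriv (χ0 ρ 0) σ * f (pt σ) + χ0 ρ 0 σ * pd 0 f (pt σ))
    - (∑ a : Fin 3, (deriv (χ1 ρ 0 a) σ * pd (sp a) f (pt σ)
        + χ1 ρ 0 a σ * pd 0 (pd (sp a) f) (pt σ)))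
    + (1/2) * ∑ a : Fin 3, ∑ b : Fin 3, (deriv (χ2 ρ 0 a b) σ * pd (sp a) (pd (sp b) f) (pt σ)
        + χ2 ρ 0 a b σ * pd 0 (pd (sp a) (pd (sp b) f)) (pt σ))

variable {χ0 χ1 χ2 Γ}

lemma hasDerivAt_pairing (hχ0s : ∀ μ ν, ContDiff ℝ (⊤ : ℕ∞) (χ0 μ ν))
    (hχ1s : ∀ μ ν a, ContDiff ℝ (⊤ : ℕ∞) (χ1 μ ν a))
    (hχ2s : ∀ μ ν a b, ContDiff ℝ (⊤ : ℕ∞) (χ2 μ ν a b))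
    {f : (Fin 4 → ℝ) → ℝ} (hf : ContDiff ℝ (⊤ : ℕ∞) f) (ρ : Fin 4) (σ : ℝ) :
    HasDerivAt (pairing χ0 χ1 χ2 ρ 0 f) (boundaryDeriv χ0 χ1 χ2 ρ f σ) σ := by
  have key : ∀ {c : ℝ → ℝ} {g : (Fin 4 → ℝ) → ℝ}, ContDiff ℝ (⊤ : ℕ∞) c →
      ContDiff ℝ (⊤ : ℕ∞) g →
      HasDerivAt (fun s => c s * g (pt s)) (deriv c σ * g (pt σ) + c σ * pd 0 g (pt σ)) σ :=
    fun hc hg => ((hc.differentiable (by simp)) σ).hasDerivAt.mul (hasDerivAt_comp_pt hg σ)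
  refine ((key (hχ0s ρ 0) hf).sub (HasDerivAt.fun_sum fun a _ =>
    key (hχ1s ρ 0 a) (pd_smooth hf _))).add (HasDerivAt.const_mul _ (HasDerivAt.fun_sum fun a _ =>
    HasDerivAt.fun_sum fun b _ => key (hχ2s ρ 0 a b) (pd_smooth (pd_smooth hf _) _)))

lemma integrable_pairing (hχ0s : ∀ μ ν, ContDiff ℝ (⊤ : ℕ∞) (χ0 μ ν))
    (hχ1s : ∀ μ ν a, ContDiff ℝ (⊤ : ℕ∞) (χ1 μ ν a))
    (hχ2s : ∀ μ ν a b, ContDiff ℝ (⊤ : ℕ∞) (χ2 μ ν a b))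
    {f : (Fin 4 → ℝ) → ℝ} (hf : ContDiff ℝ (⊤ : ℕ∞) f) (hs : HasCompactSupport f)
    (μ ν : Fin 4) : Integrable (pairing χ0 χ1 χ2 μ ν f) := by
  refine ((integrable_mul_pt (hχ0s μ ν).continuous hf hs).sub (integrable_finsetSum _ fun a _ =>
    integrable_mul_pt (hχ1s μ ν a).continuous (pd_smooth hf _) (pd_compact hs _))).add
    (Integrable.const_mul (integrable_finsetSum _ fun a _ => integrable_finsetSum _ fun b _ =>
      integrable_mul_pt (hχ2s μ ν a b).continuous (pd_smooth (pd_smooth hf _) _)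
        (pd_compact (pd_compact hs _) _)) _)

lemma integrable_boundaryDeriv (hχ0s : ∀ μ ν, ContDiff ℝ (⊤ : ℕ∞) (χ0 μ ν))
    (hχ1s : ∀ μ ν a, ContDiff ℝ (⊤ : ℕ∞) (χ1 μ ν a))
    (hχ2s : ∀ μ ν a b, ContDiff ℝ (⊤ : ℕ∞) (χ2 μ ν a b))
    {f : (Fin 4 → ℝ) → ℝ} (hf : ContDiff ℝ (⊤ : ℕ∞) f) (hs : HasCompactSupport f)
    (ρ : Fin 4) : Integrable (boundaryDeriv χ0 χ1 χ2 ρ f) := by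
  have key : ∀ {c : ℝ → ℝ} {g : (Fin 4 → ℝ) → ℝ}, ContDiff ℝ (⊤ : ℕ∞) c →
      ContDiff ℝ (⊤ : ℕ∞) g → HasCompactSupport g →
      Integrable (fun s => deriv c s * g (pt s) + c s * pd 0 g (pt s)) :=
    fun hc hg hgs => (integrable_mul_pt (hc.continuous_deriv (by simp)) hg hgs).add
      (integrable_mul_pt hc.continuous (pd_smooth hg _) (pd_compact hgs _))
  refine ((key (hχ0s ρ 0) hf hs).sub (integrable_finsetSum _ fun a _ =>
    key (hχ1s ρ 0 a) (pd_smooth hf _) (pd_compact hs _))).add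
    (Integrable.const_mul (integrable_finsetSum _ fun a _ => integrable_finsetSum _ fun b _ =>
      key (hχ2s ρ 0 a b) (pd_smooth (pd_smooth hf _) _) (pd_compact (pd_compact hs _) _)) _)

lemma integral_boundaryDeriv (hχ0s : ∀ μ ν, ContDiff ℝ (⊤ : ℕ∞) (χ0 μ ν))
    (hχ1s : ∀ μ ν a, ContDiff ℝ (⊤ : ℕ∞) (χ1 μ ν a))
    (hχ2s : ∀ μ ν a b, ContDiff ℝ (⊤ : ℕ∞) (χ2 μ ν a b))
    {f : (Fin 4 → ℝ) → ℝ} (hf : ContDiff ℝ (⊤ : ℕ∞) f) (hs : HasCompactSupport f)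
    (ρ : Fin 4) : ∫ σ, boundaryDeriv χ0 χ1 χ2 ρ f σ = 0 :=
  integral_eq_zero_of_hasDerivAt_of_integrable (hasDerivAt_pairing hχ0s hχ1s hχ2s hf ρ)
    (integrable_boundaryDeriv hχ0s hχ1s hχ2s hf hs ρ)
    (integrable_pairing hχ0s hχ1s hχ2s hf hs ρ 0)

/-- The connection terms `Γ^ρ_{μν} θ_ρ` of the weak divergence for a fixed `ρ`, with `f = θ_ρ`,
sorted by the order of the derivative falling on `f`. -/
lemma sum_pairing_connection (hχ0sym : ∀ μ ν σ, χ0 μ ν σ = χ0 ν μ σ)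
    (hχ1sym : ∀ μ ν a σ, χ1 μ ν a σ = χ1 ν μ a σ)
    (hχ2sym : ∀ μ ν a b σ, χ2 μ ν a b σ = χ2 ν μ a b σ)
    (hχ2symab : ∀ μ ν a b σ, χ2 μ ν a b σ = χ2 μ ν b a σ)
    (hΓs : ∀ ρ μ ν, ContDiff ℝ (⊤ : ℕ∞) (Γ ρ μ ν))
    {f : (Fin 4 → ℝ) → ℝ} (hf : ContDiff ℝ (⊤ : ℕ∞) f) (ρ : Fin 4) (σ : ℝ) :
    ∑ μ, ∑ ν, pairing χ0 χ1 χ2 μ ν (fun x => Γ ρ μ ν x * f x) σ =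
      ((∑ μ : Fin 4, ∑ ν : Fin 4, Γ ρ μ ν (pt σ) * χ0 ν μ σ)
        - (∑ μ : Fin 4, ∑ ν : Fin 4, ∑ a : Fin 3, pd (sp a) (Γ ρ μ ν) (pt σ) * χ1 ν μ a σ)
        + (1/2) * ∑ μ : Fin 4, ∑ ν : Fin 4, ∑ a : Fin 3, ∑ b : Fin 3,
          pd (sp b) (pd (sp a) (Γ ρ μ ν)) (pt σ) * χ2 ν μ a b σ) * f (pt σ)
      - (∑ a, ((∑ μ : Fin 4, ∑ ν : Fin 4, Γ ρ μ ν (pt σ) * χ1 ν μ a σ)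
        - ∑ μ : Fin 4, ∑ ν : Fin 4, ∑ b : Fin 3, pd (sp b) (Γ ρ μ ν) (pt σ) * χ2 ν μ b a σ)
          * pd (sp a) f (pt σ))
      + (1/2) * ∑ a, ∑ b, (∑ μ : Fin 4, ∑ ν : Fin 4, Γ ρ μ ν (pt σ) * χ2 ν μ a b σ)
          * pd (sp a) (pd (sp b) f) (pt σ) := by
  have h1 : ∀ μ ν a, pd (sp a) (fun x => Γ ρ μ ν x * f x) =
      fun x => pd (sp a) (Γ ρ μ ν) x * f x + Γ ρ μ ν x * pd (sp a) f x :=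
    fun μ ν a => pd_mul (hΓs ρ μ ν) hf _
  have h2 : ∀ μ ν a b, pd (sp a) (pd (sp b) (fun x => Γ ρ μ ν x * f x)) =
      fun x => (pd (sp a) (pd (sp b) (Γ ρ μ ν)) x * f x
        + pd (sp b) (Γ ρ μ ν) x * pd (sp a) f x)
        + (pd (sp a) (Γ ρ μ ν) x * pd (sp b) f x
        + Γ ρ μ ν x * pd (sp a) (pd (sp b) f) x) := by
    intro μ ν a b
    rw [h1, pd_add ((pd_smooth (hΓs ρ μ ν) _).mul hf) ((hΓs ρ μ ν).mul (pd_smooth hf _)),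
      pd_mul (pd_smooth (hΓs ρ μ ν) _) hf, pd_mul (hΓs ρ μ ν) (pd_smooth hf _)]
  have h3 : ∀ μ ν a b, pd (sp a) (pd (sp b) (Γ ρ μ ν)) = pd (sp b) (pd (sp a) (Γ ρ μ ν)) :=
    fun μ ν a b => pd_comm (hΓs ρ μ ν) _ _
  have e0 : ∀ μ ν, χ0 ν μ σ = χ0 μ ν σ := fun μ ν => hχ0sym ν μ σ
  have e1 : ∀ μ ν a, χ1 ν μ a σ = χ1 μ ν a σ := fun μ ν a => hχ1sym ν μ a σ
  have e2 : ∀ μ ν a b, χ2 ν μ a b σ = χ2 μ ν a b σ := fun μ ν a b => hχ2sym ν μ a b σ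
  have hL : ∀ μ ν, pairing χ0 χ1 χ2 μ ν (fun x => Γ ρ μ ν x * f x) σ =
      ((Γ ρ μ ν (pt σ) * χ0 ν μ σ)
        - (∑ a : Fin 3, pd (sp a) (Γ ρ μ ν) (pt σ) * χ1 ν μ a σ)
        + (1/2) * ∑ a : Fin 3, ∑ b : Fin 3,
          pd (sp b) (pd (sp a) (Γ ρ μ ν)) (pt σ) * χ2 ν μ a b σ) * f (pt σ)
      - (∑ a, ((Γ ρ μ ν (pt σ) * χ1 ν μ a σ)
        - ∑ b : Fin 3, pd (sp b) (Γ ρ μ ν) (pt σ) * χ2 ν μ b a σ)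
          * pd (sp a) f (pt σ))
      + (1/2) * ∑ a, ∑ b, (Γ ρ μ ν (pt σ) * χ2 ν μ a b σ)
          * pd (sp a) (pd (sp b) f) (pt σ) := by
    intro μ ν
    rw [e0 μ ν]
    simp only [pairing, h2]
    simp only [e1 μ ν, e2 μ ν, h1, Fin.sum_univ_three, hχ2symab μ ν 1 0 σ,
      hχ2symab μ ν 2 0 σ, hχ2symab μ ν 2 1 σ, h3 μ ν 1 0, h3 μ ν 2 0, h3 μ ν 2 1]
    ring
  simp only [hL]
  simp only [Fin.sum_univ_three, Finset.sum_add_distrib, Finset.sum_sub_distrib, Finset.mul_sum,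
    Finset.sum_mul, add_mul, sub_mul, mul_add]

/-- The terms `∂_μ θ_ρ` of the weak divergence for a fixed `ρ`, with `f = θ_ρ`, split into the time
part `μ = 0` and the spatial part. -/
lemma sum_pairing_deriv (hχ0sym : ∀ μ ν σ, χ0 μ ν σ = χ0 ν μ σ)
    (hχ1sym : ∀ μ ν a σ, χ1 μ ν a σ = χ1 ν μ a σ)
    (hχ2sym : ∀ μ ν a b σ, χ2 μ ν a b σ = χ2 ν μ a b σ)
    {f : (Fin 4 → ℝ) → ℝ} (hf : ContDiff ℝ (⊤ : ℕ∞) f) (ρ : Fin 4) (σ : ℝ) :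
    ∑ μ, pairing χ0 χ1 χ2 μ ρ (pd μ f) σ =
      pairing χ0 χ1 χ2 ρ 0 (pd 0 f) σ
      + ((∑ a, χ0 ρ (sp a) σ * pd (sp a) f (pt σ))
      - (1/2) * (∑ a, ∑ b, (χ1 ρ (sp b) a σ + χ1 ρ (sp a) b σ) * pd (sp a) (pd (sp b) f) (pt σ))
      + (1/2) * ∑ a, ∑ b, ∑ c,
        χ2 ρ (sp c) a b σ * pd (sp a) (pd (sp b) (pd (sp c) f)) (pt σ)) := by
  have e0 : ∀ μ, χ0 μ ρ σ = χ0 ρ μ σ := fun μ => hχ0sym μ ρ σ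
  have e1 : ∀ μ a, χ1 μ ρ a σ = χ1 ρ μ a σ := fun μ a => hχ1sym μ ρ a σ
  have e2 : ∀ μ a b, χ2 μ ρ a b σ = χ2 ρ μ a b σ := fun μ a b => hχ2sym μ ρ a b σ
  rw [Fin.sum_univ_succ]
  change _ + ∑ c : Fin 3, pairing χ0 χ1 χ2 (sp c) ρ (pd (sp c) f) σ = _
  have h3 : ∀ a b, pd (sp a) (pd (sp b) f) = pd (sp b) (pd (sp a) f) :=
    fun a b => pd_comm hf _ _
  congr 1
  · simp only [pairing, e0, e1, e2]
  · simp only [pairing, e0, e1, e2, Fin.sum_univ_three, h3 1 0, h3 2 0, h3 2 1]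
    ring

/-- Up to a total `σ`-derivative, the integrand of the weak divergence is `∑ ρ, jetOp ρ θ_ρ`. -/
lemma sum_pairing_Efield (hχ0sym : ∀ μ ν σ, χ0 μ ν σ = χ0 ν μ σ)
    (hχ1sym : ∀ μ ν a σ, χ1 μ ν a σ = χ1 ν μ a σ)
    (hχ2sym : ∀ μ ν a b σ, χ2 μ ν a b σ = χ2 ν μ a b σ)
    (hχ2symab : ∀ μ ν a b σ, χ2 μ ν a b σ = χ2 μ ν b a σ)
    (hΓs : ∀ ρ μ ν, ContDiff ℝ (⊤ : ℕ∞) (Γ ρ μ ν))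
    {θ : (Fin 4 → ℝ) → Fin 4 → ℝ} (hθ : ∀ ρ, ContDiff ℝ (⊤ : ℕ∞) (fun x => θ x ρ)) (σ : ℝ) :
    ∑ μ, ∑ ν, pairing χ0 χ1 χ2 μ ν (Efield Γ θ μ ν) σ =
      ∑ ρ, (jetOp χ0 χ1 χ2 Γ ρ (fun x => θ x ρ) σ
        - boundaryDeriv χ0 χ1 χ2 ρ (fun x => θ x ρ) σ) := by
  have hG : ∀ ρ μ ν, ContDiff ℝ (⊤ : ℕ∞) (fun x => Γ ρ μ ν x * θ x ρ) :=
    fun ρ μ ν => (hΓs ρ μ ν).mul (hθ ρ)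
  have h1 : ∀ μ ν a, pd (sp a) (Efield Γ θ μ ν) =
      fun x => (∑ ρ, pd (sp a) (fun x => Γ ρ μ ν x * θ x ρ) x)
        - pd (sp a) (pd μ (fun y => θ y ν)) x := by
    intro μ ν a
    unfold Efield
    rw [pd_sub (ContDiff.sum fun ρ _ => hG ρ μ ν) (pd_smooth (hθ ν) μ), pd_sum fun ρ => hG ρ μ ν]
  have h2 : ∀ μ ν a b, pd (sp a) (pd (sp b) (Efield Γ θ μ ν)) =
      fun x => (∑ ρ, pd (sp a) (pd (sp b) (fun x => Γ ρ μ ν x * θ x ρ)) x)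
        - pd (sp a) (pd (sp b) (pd μ (fun y => θ y ν))) x := by
    intro μ ν a b
    rw [h1, pd_sub (ContDiff.sum fun ρ _ => pd_smooth (hG ρ μ ν) _)
      (pd_smooth (pd_smooth (hθ ν) μ) _), pd_sum fun ρ => pd_smooth (hG ρ μ ν) _]
  have hE : ∀ μ ν, pairing χ0 χ1 χ2 μ ν (Efield Γ θ μ ν) σ =
      (∑ ρ, pairing χ0 χ1 χ2 μ ν (fun x => Γ ρ μ ν x * θ x ρ) σ)
        - pairing χ0 χ1 χ2 μ ν (pd μ (fun y => θ y ν)) σ := by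
    intro μ ν
    simp only [pairing, h2]
    simp only [h1]
    simp only [Efield, Fin.sum_univ_three, Fin.sum_univ_four]
    ring
  simp only [hE, Finset.sum_sub_distrib]
  have hc : ∑ μ, ∑ ν, ∑ ρ, pairing χ0 χ1 χ2 μ ν (fun x => Γ ρ μ ν x * θ x ρ) σ =
      ∑ ρ, ∑ μ, ∑ ν, pairing χ0 χ1 χ2 μ ν (fun x => Γ ρ μ ν x * θ x ρ) σ :=
    (Finset.sum_congr rfl fun μ _ => Finset.sum_comm).trans Finset.sum_comm
  rw [hc, Finset.sum_comm (f := fun μ ν => pairing χ0 χ1 χ2 μ ν (pd μ (fun y => θ y ν)) σ),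
    ← Finset.sum_sub_distrib, ← Finset.sum_sub_distrib]
  refine Finset.sum_congr rfl fun ρ _ => ?_
  rw [sum_pairing_connection hχ0sym hχ1sym hχ2sym hχ2symab hΓs (hθ ρ),
    sum_pairing_deriv hχ0sym hχ1sym hχ2sym (hθ ρ)]
  have h3 : ∀ a, pd 0 (pd (sp a) (fun x => θ x ρ)) = pd (sp a) (pd 0 (fun x => θ x ρ)) :=
    fun a => pd_comm (hθ ρ) _ _
  have h4 : ∀ a b, pd 0 (pd (sp a) (pd (sp b) (fun x => θ x ρ))) =
      pd (sp a) (pd (sp b) (pd 0 (fun x => θ x ρ))) :=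
    fun a b => by rw [pd_comm (pd_smooth (hθ ρ) _), h3]
  simp only [jetOp, boundaryDeriv, coef0, coef1, coef2, pairing, h3, h4]
  simp only [Fin.sum_univ_three (M := ℝ)]
  ring

end Coefficients

/-! ### Localization along the worldline -/

section Localization

variable {χ0 : Fin 4 → Fin 4 → ℝ → ℝ} {χ1 : Fin 4 → Fin 4 → Fin 3 → ℝ → ℝ}
  {χ2 : Fin 4 → Fin 4 → Fin 3 → Fin 3 → ℝ → ℝ}
  {Γ : Fin 4 → Fin 4 → Fin 4 → (Fin 4 → ℝ) → ℝ}

lemma Efield_smooth (hΓs : ∀ ρ μ ν, ContDiff ℝ (⊤ : ℕ∞) (Γ ρ μ ν))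
    {θ : (Fin 4 → ℝ) → Fin 4 → ℝ} (hθ : ∀ ρ, ContDiff ℝ (⊤ : ℕ∞) (fun x => θ x ρ))
    (μ ν : Fin 4) : ContDiff ℝ (⊤ : ℕ∞) (Efield Γ θ μ ν) :=
  (ContDiff.sum fun ρ _ => (hΓs ρ μ ν).mul (hθ ρ)).sub (pd_smooth (hθ ν) μ)

lemma component_compact {θ : (Fin 4 → ℝ) → Fin 4 → ℝ} (hs : HasCompactSupport θ) (ρ : Fin 4) :
    HasCompactSupport (fun x => θ x ρ) :=
  hs.comp_left (g := fun v : Fin 4 → ℝ => v ρ) rfl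

lemma Efield_compact {θ : (Fin 4 → ℝ) → Fin 4 → ℝ} (hs : HasCompactSupport θ)
    (μ ν : Fin 4) : HasCompactSupport (Efield Γ θ μ ν) := by
  have h2 := pd_compact (component_compact hs ν) μ
  refine HasCompactSupport.intro (hs.isCompact.union h2.isCompact) ?_
  intro x hx
  simp only [Set.mem_union, not_or] at hx
  simp [Efield, image_eq_zero_of_notMem_tsupport hx.1, image_eq_zero_of_notMem_tsupport hx.2]

/-- Integration by parts in `σ`: the weak divergence is the integral of the jet operator. -/
lemma weak_divergence_eq (hχ0s : ∀ μ ν, ContDiff ℝ (⊤ : ℕ∞) (χ0 μ ν))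
    (hχ1s : ∀ μ ν a, ContDiff ℝ (⊤ : ℕ∞) (χ1 μ ν a))
    (hχ2s : ∀ μ ν a b, ContDiff ℝ (⊤ : ℕ∞) (χ2 μ ν a b))
    (hχ0sym : ∀ μ ν σ, χ0 μ ν σ = χ0 ν μ σ)
    (hχ1sym : ∀ μ ν a σ, χ1 μ ν a σ = χ1 ν μ a σ)
    (hχ2sym : ∀ μ ν a b σ, χ2 μ ν a b σ = χ2 ν μ a b σ)
    (hχ2symab : ∀ μ ν a b σ, χ2 μ ν a b σ = χ2 μ ν b a σ)
    (hΓs : ∀ ρ μ ν, ContDiff ℝ (⊤ : ℕ∞) (Γ ρ μ ν))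
    {θ : (Fin 4 → ℝ) → Fin 4 → ℝ} (hθ : ContDiff ℝ (⊤ : ℕ∞) θ) (hs : HasCompactSupport θ) :
    ∑ μ, ∑ ν, ∫ σ, pairing χ0 χ1 χ2 μ ν (Efield Γ θ μ ν) σ =
      ∫ σ, ∑ ρ, jetOp χ0 χ1 χ2 Γ ρ (fun x => θ x ρ) σ := by
  have hθ' : ∀ ρ, ContDiff ℝ (⊤ : ℕ∞) (fun x => θ x ρ) := contDiff_pi.1 hθ
  have hI : ∀ μ ν, Integrable (pairing χ0 χ1 χ2 μ ν (Efield Γ θ μ ν)) := fun μ ν =>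
    integrable_pairing hχ0s hχ1s hχ2s (Efield_smooth hΓs hθ' μ ν) (Efield_compact hs μ ν) μ ν
  have hB : ∀ ρ, Integrable (boundaryDeriv χ0 χ1 χ2 ρ (fun x => θ x ρ)) := fun ρ =>
    integrable_boundaryDeriv hχ0s hχ1s hχ2s (hθ' ρ) (component_compact hs ρ) ρ
  have hJ : ∀ σ, ∑ ρ, jetOp χ0 χ1 χ2 Γ ρ (fun x => θ x ρ) σ =
      (∑ μ, ∑ ν, pairing χ0 χ1 χ2 μ ν (Efield Γ θ μ ν) σ)
        + ∑ ρ, boundaryDeriv χ0 χ1 χ2 ρ (fun x => θ x ρ) σ := by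
    intro σ
    rw [sum_pairing_Efield hχ0sym hχ1sym hχ2sym hχ2symab hΓs hθ' σ, Finset.sum_sub_distrib]
    ring
  simp only [hJ]
  rw [integral_add (integrable_finsetSum _ fun μ _ => integrable_finsetSum _ fun ν _ => hI μ ν)
    (integrable_finsetSum _ fun ρ _ => hB ρ), integral_finsetSum _ fun ρ _ => hB ρ,
    integral_finsetSum _ fun μ _ => integrable_finsetSum _ fun ν _ => hI μ ν]
  simp only [integral_finsetSum _ fun ν _ => hI _ ν,
    integral_boundaryDeriv hχ0s hχ1s hχ2s (hθ' _) (component_compact hs _),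
    Finset.sum_const_zero, add_zero]

lemma jetOp_zero (ρ : Fin 4) (σ : ℝ) : jetOp χ0 χ1 χ2 Γ ρ (fun _ => 0) σ = 0 := by
  simp [jetOp, pd_const]

lemma jetOp_time_mul {φ : ℝ → ℝ} (hφ : ContDiff ℝ (⊤ : ℕ∞) φ) {f : (Fin 4 → ℝ) → ℝ}
    (hf : ContDiff ℝ (⊤ : ℕ∞) f) (ρ : Fin 4) (σ : ℝ) :
    jetOp χ0 χ1 χ2 Γ ρ (fun x => φ (x 0) * f x) σ = φ σ * jetOp χ0 χ1 χ2 Γ ρ f σ := by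
  have hp : pt σ 0 = σ := by simp [pt]
  have h1 : ∀ a, pd (sp a) (fun x => φ (x 0) * f x) = fun x => φ (x 0) * pd (sp a) f x :=
    fun a => pd_time_mul hφ hf a
  have h2 : ∀ a b, pd (sp a) (fun x => φ (x 0) * pd (sp b) f x) =
      fun x => φ (x 0) * pd (sp a) (pd (sp b) f) x :=
    fun a b => pd_time_mul hφ (pd_smooth hf _) a
  have h3 : ∀ a b c, pd (sp a) (fun x => φ (x 0) * pd (sp b) (pd (sp c) f) x) =
      fun x => φ (x 0) * pd (sp a) (pd (sp b) (pd (sp c) f)) x :=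
    fun a b c => pd_time_mul hφ (pd_smooth (pd_smooth hf _) _) a
  simp only [jetOp, h1, h2, h3, hp, Fin.sum_univ_three]
  ring

lemma jetOp_congr {f g : (Fin 4 → ℝ) → ℝ} {σ : ℝ} (h : f =ᶠ[nhds (pt σ)] g) (ρ : Fin 4) :
    jetOp χ0 χ1 χ2 Γ ρ f σ = jetOp χ0 χ1 χ2 Γ ρ g σ := by
  have h1 : ∀ a, pd (sp a) f (pt σ) = pd (sp a) g (pt σ) := fun a => (pd_congr h _).eq_of_nhds
  have h2 : ∀ a b, pd (sp a) (pd (sp b) f) (pt σ) = pd (sp a) (pd (sp b) g) (pt σ) :=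
    fun a b => (pd_congr (pd_congr h _) _).eq_of_nhds
  have h3 : ∀ a b c, pd (sp a) (pd (sp b) (pd (sp c) f)) (pt σ) =
      pd (sp a) (pd (sp b) (pd (sp c) g)) (pt σ) :=
    fun a b c => (pd_congr (pd_congr (pd_congr h _) _) _).eq_of_nhds
  simp only [jetOp, h1, h2, h3, h.eq_of_nhds]

lemma jetOp_continuous (hχ0s : ∀ μ ν, ContDiff ℝ (⊤ : ℕ∞) (χ0 μ ν))
    (hχ1s : ∀ μ ν a, ContDiff ℝ (⊤ : ℕ∞) (χ1 μ ν a))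
    (hχ2s : ∀ μ ν a b, ContDiff ℝ (⊤ : ℕ∞) (χ2 μ ν a b))
    (hΓs : ∀ ρ μ ν, ContDiff ℝ (⊤ : ℕ∞) (Γ ρ μ ν))
    {f : (Fin 4 → ℝ) → ℝ} (hf : ContDiff ℝ (⊤ : ℕ∞) f) (ρ : Fin 4) :
    Continuous (jetOp χ0 χ1 χ2 Γ ρ f) := by
  have c0 : ∀ μ ν, Continuous (χ0 μ ν) := fun μ ν => (hχ0s μ ν).continuous
  have c1 : ∀ μ ν a, Continuous (χ1 μ ν a) := fun μ ν a => (hχ1s μ ν a).continuous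
  have c2 : ∀ μ ν a b, Continuous (χ2 μ ν a b) := fun μ ν a b => (hχ2s μ ν a b).continuous
  have d0 : ∀ μ ν, Continuous (deriv (χ0 μ ν)) :=
    fun μ ν => (hχ0s μ ν).continuous_deriv (by simp)
  have d1 : ∀ μ ν a, Continuous (deriv (χ1 μ ν a)) :=
    fun μ ν a => (hχ1s μ ν a).continuous_deriv (by simp)
  have d2 : ∀ μ ν a b, Continuous (deriv (χ2 μ ν a b)) :=
    fun μ ν a b => (hχ2s μ ν a b).continuous_deriv (by simp)
  have g0 := fun μ ν => (hΓs ρ μ ν).continuous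
  have g1 := fun μ ν a => (pd_smooth (hΓs ρ μ ν) (sp a)).continuous
  have g2 := fun μ ν a b => (pd_smooth (pd_smooth (hΓs ρ μ ν) (sp a)) (sp b)).continuous
  have f0 := hf.continuous
  have f1 := fun a => (pd_smooth hf (sp a)).continuous
  have f2 := fun a b => (pd_smooth (pd_smooth hf (sp a)) (sp b)).continuous
  have f3 := fun a b c => (pd_smooth (pd_smooth (pd_smooth hf (sp a)) (sp b)) (sp c)).continuous
  have hpt := pt_smooth.continuous
  unfold jetOp coef0 coef1 coef2
  fun_prop

/-- If the integral of the jet operator vanishes on all test covector fields, then the jet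
operator vanishes pointwise on every smooth function: test with `φ(σ) η f` in the `ρ`-th
component, where `η` is a cutoff equal to `1` near the part of the worldline where `φ ≠ 0`. -/
lemma jetOp_eq_zero (hχ0s : ∀ μ ν, ContDiff ℝ (⊤ : ℕ∞) (χ0 μ ν))
    (hχ1s : ∀ μ ν a, ContDiff ℝ (⊤ : ℕ∞) (χ1 μ ν a))
    (hχ2s : ∀ μ ν a b, ContDiff ℝ (⊤ : ℕ∞) (χ2 μ ν a b))
    (hΓs : ∀ ρ μ ν, ContDiff ℝ (⊤ : ℕ∞) (Γ ρ μ ν))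
    (hA : ∀ θ : (Fin 4 → ℝ) → Fin 4 → ℝ, ContDiff ℝ (⊤ : ℕ∞) θ → HasCompactSupport θ →
      ∫ σ, ∑ ρ, jetOp χ0 χ1 χ2 Γ ρ (fun x => θ x ρ) σ = 0)
    {f : (Fin 4 → ℝ) → ℝ} (hf : ContDiff ℝ (⊤ : ℕ∞) f) (ρ : Fin 4) (σ : ℝ) :
    jetOp χ0 χ1 χ2 Γ ρ f σ = 0 := by
  have hcont := jetOp_continuous hχ0s hχ1s hχ2s hΓs hf ρ
  suffices h : jetOp χ0 χ1 χ2 Γ ρ f =ᵐ[volume] fun _ => 0 from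
    congrFun ((hcont.ae_eq_iff_eq volume continuous_const).1 h) σ
  refine ae_eq_zero_of_integral_contDiff_smul_eq_zero hcont.locallyIntegrable ?_
  intro φ hφ hφs
  obtain ⟨R, hR, hsub⟩ := hφs.isCompact.isBounded.subset_ball_lt 0 (0 : ℝ)
  let η : ContDiffBump (0 : Fin 4 → ℝ) := ⟨R, R + 1, hR, by linarith⟩
  have hη : ContDiff ℝ (⊤ : ℕ∞) (fun x => η x) := η.contDiff
  have hg : ContDiff ℝ (⊤ : ℕ∞) (fun x : Fin 4 → ℝ => φ (x 0) * (η x * f x)) :=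
    (hφ.comp (contDiff_apply ℝ ℝ (0 : Fin 4))).mul (hη.mul hf)
  have hz := hA (fun x ν => if ν = ρ then φ (x 0) * (η x * f x) else 0) ?_ ?_
  · rw [← hz]
    refine integral_congr_ae (Filter.Eventually.of_forall fun s => ?_)
    have hsum : ∑ ν, jetOp χ0 χ1 χ2 Γ ν
        (fun x => if ν = ρ then φ (x 0) * (η x * f x) else 0) s =
        jetOp χ0 χ1 χ2 Γ ρ (fun x => φ (x 0) * (η x * f x)) s := by
      rw [Finset.sum_eq_single ρ]
      · simp
      · intro ν _ hν
        simp only [hν, if_false]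
        exact jetOp_zero ν s
      · simp
    simp only [smul_eq_mul]
    rw [hsum, jetOp_time_mul hφ (hη.mul hf)]
    by_cases h0 : φ s = 0
    · simp [h0]
    · congr 1
      refine (jetOp_congr ?_ ρ).symm
      have hs : ‖s‖ < R := by simpa using hsub (subset_tsupport φ h0)
      have hpt : pt s ∈ Metric.ball (0 : Fin 4 → ℝ) η.rIn := by
        rw [mem_ball_zero_iff, pi_norm_lt_iff hR]
        intro μ
        by_cases h : μ = 0
        · simpa [pt, h] using hs
        · simpa [pt, h] using hR
      filter_upwards [η.eventuallyEq_one_of_mem_ball hpt] with x hx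
      simp [hx]
  · rw [contDiff_pi]
    intro ν
    by_cases h : ν = ρ
    · simpa [h] using hg
    · simpa [h] using contDiff_const
  · refine HasCompactSupport.intro η.hasCompactSupport.isCompact ?_
    intro x hx
    funext ν
    simp [image_eq_zero_of_notMem_tsupport hx]

end Localization

/-! ### Testing on monomials -/

section Monomials

lemma pd_spatial_coord (a b : Fin 3) :
    pd (sp b) (fun x => x (sp a)) = fun _ => if a = b then 1 else 0 := by
  rw [pd_coord]
  simp [sp]

lemma pd_const_mul (c : ℝ) {g : (Fin 4 → ℝ) → ℝ} (hg : ContDiff ℝ (⊤ : ℕ∞) g) (μ : Fin 4) :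
    pd μ (fun x => c * g x) = fun x => c * pd μ g x := by
  rw [pd_mul (f := fun _ => c) contDiff_const hg, pd_const]
  simp

lemma coord_smooth (a : Fin 3) : ContDiff ℝ (⊤ : ℕ∞) (fun x : Fin 4 → ℝ => x (sp a)) :=
  contDiff_apply ℝ ℝ (sp a)

lemma pd_coord_mul {g : (Fin 4 → ℝ) → ℝ} (hg : ContDiff ℝ (⊤ : ℕ∞) g)
    (a p : Fin 3) :
    pd (sp p) (fun x => x (sp a) * g x) =
      fun x => (if a = p then 1 else 0) * g x + x (sp a) * pd (sp p) g x := by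
  rw [pd_mul (coord_smooth a) hg, pd_spatial_coord]

lemma pd_pd_coord_mul {g : (Fin 4 → ℝ) → ℝ} (hg : ContDiff ℝ (⊤ : ℕ∞) g)
    (a p q : Fin 3) :
    pd (sp p) (pd (sp q) (fun x => x (sp a) * g x)) =
      fun x => (if a = q then 1 else 0) * pd (sp p) g x
        + ((if a = p then 1 else 0) * pd (sp q) g x + x (sp a) * pd (sp p) (pd (sp q) g) x) := by
  rw [pd_coord_mul hg, pd_add (contDiff_const.mul hg) ((coord_smooth a).mul (pd_smooth hg _)),
    pd_const_mul _ hg, pd_coord_mul (pd_smooth hg _)]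

lemma pd_pd_pd_coord_mul {g : (Fin 4 → ℝ) → ℝ} (hg : ContDiff ℝ (⊤ : ℕ∞) g)
    (a p q r : Fin 3) :
    pd (sp p) (pd (sp q) (pd (sp r) (fun x => x (sp a) * g x))) =
      fun x => (if a = r then 1 else 0) * pd (sp p) (pd (sp q) g) x
        + ((if a = q then 1 else 0) * pd (sp p) (pd (sp r) g) x
        + ((if a = p then 1 else 0) * pd (sp q) (pd (sp r) g) x
          + x (sp a) * pd (sp p) (pd (sp q) (pd (sp r) g)) x)) := by
  have h := pd_smooth hg
  rw [pd_pd_coord_mul hg, pd_add (contDiff_const.mul (h _))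
      ((contDiff_const.mul (h _)).add ((coord_smooth a).mul (pd_smooth (h _) _))),
    pd_add (contDiff_const.mul (h _)) ((coord_smooth a).mul (pd_smooth (h _) _)),
    pd_const_mul _ (h _), pd_const_mul _ (h _), pd_coord_mul (pd_smooth (h _) _)]

/-- Since `z^a` vanishes on the worldline, each surviving term has exactly one derivative falling
on `z^a`. -/
lemma jetOp_coord_mul {g : (Fin 4 → ℝ) → ℝ} (hg : ContDiff ℝ (⊤ : ℕ∞) g)
    (χ0 : Fin 4 → Fin 4 → ℝ → ℝ) (χ1 : Fin 4 → Fin 4 → Fin 3 → ℝ → ℝ)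
    (χ2 : Fin 4 → Fin 4 → Fin 3 → Fin 3 → ℝ → ℝ)
    (Γ : Fin 4 → Fin 4 → Fin 4 → (Fin 4 → ℝ) → ℝ) (ρ : Fin 4) (a : Fin 3) (σ : ℝ) :
    jetOp χ0 χ1 χ2 Γ ρ (fun x => x (sp a) * g x) σ =
      coef1 χ0 χ1 χ2 Γ ρ a σ * g (pt σ)
      + (∑ b, (coef2 χ1 χ2 Γ ρ a b σ + coef2 χ1 χ2 Γ ρ b a σ) * pd (sp b) g (pt σ))
      - (1/2) * ∑ b, ∑ c, (χ2 ρ (sp a) b c σ + χ2 ρ (sp c) b a σ + χ2 ρ (sp c) a b σ)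
        * pd (sp b) (pd (sp c) g) (pt σ) := by
  have hp : pt σ (sp a) = 0 := by simp [pt, sp]
  simp only [jetOp, pd_pd_pd_coord_mul hg]
  simp only [pd_pd_coord_mul hg]
  simp only [pd_coord_mul hg, hp]
  fin_cases a <;> simp [Fin.sum_univ_three] <;> ring

end Monomials

/-- A three-index array whose total symmetrization vanishes contracts to zero with a totally
symmetric one. -/
lemma sum_mul_symm_eq_zero {X T : Fin 3 → Fin 3 → Fin 3 → ℝ}
    (h12 : ∀ a b c, T a b c = T b a c) (h23 : ∀ a b c, T a b c = T a c b)
    (hX : ∀ a b c, X a b c + X a c b + X b a c + X b c a + X c a b + X c b a = 0) :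
    ∑ a, ∑ b, ∑ c, X a b c * T a b c = 0 := by
  have s23 : ∀ Y : Fin 3 → Fin 3 → Fin 3 → ℝ,
      ∑ a, ∑ b, ∑ c, Y a c b * T a b c = ∑ a, ∑ b, ∑ c, Y a b c * T a b c := by
    intro Y
    refine Finset.sum_congr rfl fun a _ => ?_
    rw [Finset.sum_comm]
    simp only [h23 a]
  have s12 : ∀ Y : Fin 3 → Fin 3 → Fin 3 → ℝ,
      ∑ a, ∑ b, ∑ c, Y b a c * T a b c = ∑ a, ∑ b, ∑ c, Y a b c * T a b c := by
    intro Y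
    rw [Finset.sum_comm]
    refine Finset.sum_congr rfl fun a _ => Finset.sum_congr rfl fun b _ => ?_
    simp only [h12 b a]
  have e1 := s23 X
  have e2 := s12 X
  have e3 := (s23 fun a b c => X b a c).trans e2
  have e4 := (s12 fun a b c => X a c b).trans e1
  have e5 := (s12 fun a b c => X c a b).trans e3
  have hs : ∑ a, ∑ b, ∑ c, (X a b c + X a c b + X b a c + X b c a + X c a b + X c b a)
      * T a b c = 0 := by simp [hX]
  simp only [add_mul, Finset.sum_add_distrib] at hs
  linarith

/-- The weak divergence-free condition for a stress-energy quadrupole is equivalent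
to the quadrupole dynamical equations (the Ellis form of the equations of motion). -/
theorem quadrupole_divergence_free_iff_equations
    (χ0 : Fin 4 → Fin 4 → ℝ → ℝ)
    (χ1 : Fin 4 → Fin 4 → Fin 3 → ℝ → ℝ)
    (χ2 : Fin 4 → Fin 4 → Fin 3 → Fin 3 → ℝ → ℝ)
    (hχ0s : ∀ μ ν, ContDiff ℝ (⊤ : ℕ∞) (χ0 μ ν))
    (hχ1s : ∀ μ ν a, ContDiff ℝ (⊤ : ℕ∞) (χ1 μ ν a))
    (hχ2s : ∀ μ ν a b, ContDiff ℝ (⊤ : ℕ∞) (χ2 μ ν a b))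
    (hχ0sym : ∀ μ ν σ, χ0 μ ν σ = χ0 ν μ σ)
    (hχ1sym : ∀ μ ν a σ, χ1 μ ν a σ = χ1 ν μ a σ)
    (hχ2sym : ∀ μ ν a b σ, χ2 μ ν a b σ = χ2 ν μ a b σ)
    (hχ2symab : ∀ μ ν a b σ, χ2 μ ν a b σ = χ2 μ ν b a σ)
    (Γ : Fin 4 → Fin 4 → Fin 4 → (Fin 4 → ℝ) → ℝ)
    (hΓs : ∀ ρ μ ν, ContDiff ℝ (⊤ : ℕ∞) (Γ ρ μ ν)) :
    (∀ θ : (Fin 4 → ℝ) → Fin 4 → ℝ,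
      ContDiff ℝ (⊤ : ℕ∞) θ → HasCompactSupport θ →
      (∑ μ : Fin 4, ∑ ν : Fin 4, ∫ σ : ℝ,
        (χ0 μ ν σ * Efield Γ θ μ ν (pt σ)
          - ∑ a : Fin 3, χ1 μ ν a σ * pd (sp a) (Efield Γ θ μ ν) (pt σ)
          + (1/2) * ∑ a : Fin 3, ∑ b : Fin 3,
              χ2 μ ν a b σ * pd (sp a) (pd (sp b) (Efield Γ θ μ ν)) (pt σ))) = 0)
    ↔
    (∀ σ : ℝ,
      (∀ μ, deriv (χ0 μ 0) σ =
          - (∑ ν : Fin 4, ∑ ρ : Fin 4, Γ μ ν ρ (pt σ) * χ0 ρ ν σ)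
          + (∑ ν : Fin 4, ∑ ρ : Fin 4, ∑ a : Fin 3,
              pd (sp a) (Γ μ ν ρ) (pt σ) * χ1 ρ ν a σ)
          - (1/2) * ∑ ν : Fin 4, ∑ ρ : Fin 4, ∑ a : Fin 3, ∑ b : Fin 3,
              pd (sp b) (pd (sp a) (Γ μ ν ρ)) (pt σ) * χ2 ρ ν a b σ) ∧
      (∀ μ a, deriv (fun s => χ1 μ 0 a s) σ =
          - χ0 μ (sp a) σ
          - (∑ ν : Fin 4, ∑ ρ : Fin 4, Γ μ ν ρ (pt σ) * χ1 ρ ν a σ)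
          + ∑ ν : Fin 4, ∑ ρ : Fin 4, ∑ b : Fin 3,
              pd (sp b) (Γ μ ν ρ) (pt σ) * χ2 ρ ν b a σ) ∧
      (∀ μ a b, deriv (fun s => χ2 μ 0 a b s) σ =
          - (χ1 μ (sp b) a σ + χ1 μ (sp a) b σ)
          - ∑ ν : Fin 4, ∑ ρ : Fin 4, Γ μ ν ρ (pt σ) * χ2 ρ ν a b σ) ∧
      (∀ μ a b c,
          χ2 μ (sp a) b c σ + χ2 μ (sp a) c b σ + χ2 μ (sp b) a c σ +
            χ2 μ (sp b) c a σ + χ2 μ (sp c) a b σ + χ2 μ (sp c) b a σ = 0)) := by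
  have hred : (∀ θ : (Fin 4 → ℝ) → Fin 4 → ℝ,
      ContDiff ℝ (⊤ : ℕ∞) θ → HasCompactSupport θ →
      (∑ μ : Fin 4, ∑ ν : Fin 4, ∫ σ : ℝ,
        pairing χ0 χ1 χ2 μ ν (Efield Γ θ μ ν) σ) = 0) ↔
      ∀ θ : (Fin 4 → ℝ) → Fin 4 → ℝ, ContDiff ℝ (⊤ : ℕ∞) θ → HasCompactSupport θ →
        ∫ σ, ∑ ρ, jetOp χ0 χ1 χ2 Γ ρ (fun x => θ x ρ) σ = 0 := by
    refine forall_congr' fun θ => forall_congr' fun hθ => forall_congr' fun hs => ?_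
    rw [weak_divergence_eq hχ0s hχ1s hχ2s hχ0sym hχ1sym hχ2sym hχ2symab hΓs hθ hs]
  refine hred.trans ⟨fun hA σ => ?_, fun hB θ hθ hs => ?_⟩
  · have hJ : ∀ {f : (Fin 4 → ℝ) → ℝ}, ContDiff ℝ (⊤ : ℕ∞) f → ∀ ρ,
        jetOp χ0 χ1 χ2 Γ ρ f σ = 0 :=
      fun hf ρ => jetOp_eq_zero hχ0s hχ1s hχ2s hΓs hA hf ρ σ
    have hone : ContDiff ℝ (⊤ : ℕ∞) (fun _ : Fin 4 → ℝ => (1 : ℝ)) := contDiff_const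
    have hp : ∀ a, pt σ (sp a) = 0 := fun a => by simp [pt, sp]
    refine ⟨fun ρ => ?_, fun ρ a => ?_, fun ρ a b => ?_, fun ρ a b c => ?_⟩
    · have h := hJ hone ρ
      simp only [jetOp, pd_const, mul_zero, Finset.sum_const_zero, mul_one, add_zero,
        sub_zero] at h
      rw [coef0] at h
      linarith
    · have h := hJ ((coord_smooth a).mul hone) ρ
      rw [jetOp_coord_mul hone] at h
      simp only [pd_const, mul_zero, Finset.sum_const_zero, mul_one, add_zero, sub_zero] at h
      rw [coef1] at h
      linarith
    · have h := hJ ((coord_smooth a).mul (coord_smooth b)) ρ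
      rw [jetOp_coord_mul (coord_smooth b)] at h
      simp only [pd_spatial_coord, pd_const, hp, mul_zero, Finset.sum_const_zero, zero_add,
        sub_zero, mul_ite, mul_one, Finset.sum_ite_eq, Finset.mem_univ, if_true] at h
      have hs : coef2 χ1 χ2 Γ ρ b a σ = coef2 χ1 χ2 Γ ρ a b σ := by
        have e : ∀ ν μ, χ2 ν μ b a = χ2 ν μ a b := fun ν μ => funext (hχ2symab ν μ b a)
        simp only [coef2, e, add_comm]
      rw [hs, coef2] at h
      linarith
    · have h := hJ ((coord_smooth a).mul ((coord_smooth b).mul (coord_smooth c))) ρ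
      rw [jetOp_coord_mul ((coord_smooth b).mul (coord_smooth c))] at h
      simp only [pd_pd_coord_mul (coord_smooth c)] at h
      simp [pd_coord_mul (coord_smooth c), pd_spatial_coord, pd_const, hp, mul_add,
        Finset.sum_add_distrib] at h
      linarith
  · refine (integral_congr_ae (Filter.Eventually.of_forall fun σ => ?_)).trans (integral_zero' ℝ ℝ)
    obtain ⟨h0, h1, h2, h3⟩ := hB σ
    refine Finset.sum_eq_zero fun ρ _ => ?_
    have z0 : coef0 χ0 χ1 χ2 Γ ρ σ = 0 := by rw [coef0, h0 ρ]; ring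
    have z1 : ∀ a, coef1 χ0 χ1 χ2 Γ ρ a σ = 0 := fun a => by rw [coef1, h1 ρ a]; ring
    have z2 : ∀ a b, coef2 χ1 χ2 Γ ρ a b σ = 0 := fun a b => by rw [coef2, h2 ρ a b]; ring
    have hf : ContDiff ℝ (⊤ : ℕ∞) (fun x => θ x ρ) := contDiff_pi.1 hθ ρ
    simp only [jetOp, z0, z1, z2, zero_mul, Finset.sum_const_zero, add_zero, zero_sub,
      neg_eq_zero, mul_eq_zero]
    right
    exact sum_mul_symm_eq_zero
      (T := fun a b c => pd (sp a) (pd (sp b) (pd (sp c) (fun x => θ x ρ))) (pt σ))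
      (X := fun a b c => χ2 ρ (sp c) a b σ)
      (fun a b c => by rw [pd_comm (pd_smooth hf _)])
      (fun a b c => by rw [pd_comm hf])
      (fun a b c => by linarith [h3 ρ a b c])

end
end
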